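/- arXiv:2007.05071 — 8 statements merged into one kernel-verified Lean document; each statement's English description precedes it below -/
import Mathlib

section
/- Fix τ ∈ (0,1) and ζ > 0, and let C = log₂(1 + ζ/τ). For any spectral efficiency ρ with 0 < ρ < C, setting α = 1/(2^ρ − 1), the asymptotic packet error probability p_e(N) := Q(√N·(α·ζ − τ)/√(α²·ζ + τ)) tends to 0 as N → ∞ (N ranging over the positive integers), and consequently the asymptotic age of information Δ(N) := 1/(τ·(1 − p_e(N))) tends to 1/τ as N → ∞. -/
open Filter Topology

/-- The standard Gaussian tail function `Q(x) = (1/√(2π)) ∫ₓ^∞ e^{−t²/2} dt`. -/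
noncomputable def gaussQ (x : ℝ) : ℝ :=
  (Real.sqrt (2 * Real.pi))⁻¹ * ∫ t in Set.Ioi x, Real.exp (-t ^ 2 / 2)

/-!
Being below capacity, `ρ < log₂ (1 + ζ/τ)`, is equivalent to the margin `αζ − τ` being positive.
The argument of `Q` therefore grows like `√N`, and `Q` vanishes at infinity because it is the
tail of a convergent integral.
-/

theorem tendsto_gaussQ_atTop : Tendsto gaussQ atTop (𝓝 0) := by
  unfold gaussQ
  simpa only [mul_zero, id_eq] using
    (MeasureTheory.tendsto_integral_Ioi_zero tendsto_id).const_mul (Real.sqrt (2 * Real.pi))⁻¹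

theorem tendsto_gaussQ_sqrt_mul_div {ι : Type*} {l : Filter ι} {N : ι → ℝ}
    (hN : Tendsto N l atTop) {c d : ℝ} (hc : 0 < c) (hd : 0 < d) :
    Tendsto (fun i => gaussQ (Real.sqrt (N i) * c / d)) l (𝓝 0) :=
  tendsto_gaussQ_atTop.comp <|
    ((Real.tendsto_sqrt_atTop.comp hN).atTop_mul_const hc).atTop_div_const hd

theorem lt_logb_one_add_div_iff {b τ ζ ρ : ℝ} (hb : 1 < b) (hτ : 0 < τ) (hζ : 0 < ζ)
    (hρ : 0 < ρ) : ρ < Real.logb b (1 + ζ / τ) ↔ τ < 1 / (b ^ ρ - 1) * ζ := by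
  have hpow : 0 < b ^ ρ - 1 := sub_pos.2 (Real.one_lt_rpow hb hρ)
  calc ρ < Real.logb b (1 + ζ / τ)
      ↔ b ^ ρ < 1 + ζ / τ := Real.lt_logb_iff_rpow_lt hb (by positivity)
    _ ↔ b ^ ρ - 1 < ζ / τ := sub_lt_iff_lt_add'.symm
    _ ↔ τ < ζ / (b ^ ρ - 1) := lt_div_comm₀ hpow hτ
    _ ↔ τ < 1 / (b ^ ρ - 1) * ζ := by rw [one_div_mul_eq_div]

theorem tendsto_one_div_mul_one_sub {ι : Type*} {l : Filter ι} {p : ι → ℝ}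
    (hp : Tendsto p l (𝓝 0)) {τ : ℝ} (hτ : τ ≠ 0) :
    Tendsto (fun i => 1 / (τ * (1 - p i))) l (𝓝 (1 / τ)) := by
  have hden : Tendsto (fun i => τ * (1 - p i)) l (𝓝 τ) := by
    simpa only [sub_zero, mul_one] using (hp.const_sub 1).const_mul τ
  exact tendsto_const_nhds.div hden hτ

theorem age_limited_capacity_achievability_general {ι : Type*} {l : Filter ι} {N : ι → ℝ}
    (hN : Tendsto N l atTop) {τ ζ ρ : ℝ} (hτ : 0 < τ) (hζ : 0 < ζ)
    (hρ : 0 < ρ) (hρC : ρ < Real.logb 2 (1 + ζ / τ))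
    {α : ℝ} (hα : α = 1 / ((2 : ℝ) ^ ρ - 1))
    {pe : ι → ℝ}
    (hpe : ∀ i, pe i =
      gaussQ (Real.sqrt (N i) * (α * ζ - τ) / Real.sqrt (α ^ 2 * ζ + τ))) :
    Tendsto pe l (𝓝 0) ∧
      Tendsto (fun i => 1 / (τ * (1 - pe i))) l (𝓝 (1 / τ)) := by
  have hmargin : 0 < α * ζ - τ := by
    rw [hα]
    exact sub_pos.2 ((lt_logb_one_add_div_iff one_lt_two hτ hζ hρ).1 hρC)
  have hdev : 0 < Real.sqrt (α ^ 2 * ζ + τ) := Real.sqrt_pos.2 (by positivity)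
  have hpe_zero : Tendsto pe l (𝓝 0) :=
    (tendsto_gaussQ_sqrt_mul_div hN hmargin hdev).congr fun i => (hpe i).symm
  exact ⟨hpe_zero, tendsto_one_div_mul_one_sub hpe_zero hτ.ne'⟩

/-- Achievability (Theorem 2): for any spectral efficiency `ρ` below the age-limited
capacity `C = log₂(1 + ζ/τ)`, the asymptotic packet error probability
`p_e(N) = Q(√N (αζ − τ)/√(α²ζ + τ))` (with `α = 1/(2^ρ − 1)`) tends to `0`, and the
asymptotic age of information `Δ(N) = 1/(τ(1 − p_e(N)))` tends to `1/τ`, as `N → ∞`. -/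
theorem age_limited_capacity_achievability
    (τ ζ ρ : ℝ) (hτ0 : 0 < τ) (hτ1 : τ < 1) (hζ : 0 < ζ)
    (hρ0 : 0 < ρ) (hρC : ρ < Real.logb 2 (1 + ζ / τ))
    (α : ℝ) (hα : α = 1 / ((2 : ℝ) ^ ρ - 1))
    (pe : ℕ → ℝ)
    (hpe : ∀ N : ℕ, pe N =
      gaussQ (Real.sqrt N * (α * ζ - τ) / Real.sqrt (α ^ 2 * ζ + τ))) :
    Tendsto pe atTop (𝓝 0) ∧
      Tendsto (fun N : ℕ => 1 / (τ * (1 - pe N))) atTop (𝓝 (1 / τ)) :=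
  age_limited_capacity_achievability_general tendsto_natCast_atTop_atTop hτ0 hζ hρ0 hρC hα hpe
end

section
/- Fix τ ∈ (0,1) and ζ > 0, and let C = log₂(1 + ζ/τ). For any spectral efficiency ρ with ρ > C, setting α = 1/(2^ρ − 1), the asymptotic packet error probability p_e(N) := Q(√N·(α·ζ − τ)/√(α²·ζ + τ)) tends to 1 as N → ∞ (N ranging over the positive integers), and consequently the asymptotic age of information Δ(N) := 1/(τ·(1 − p_e(N))) tends to +∞ as N → ∞. -/
open Filter Topology

/-!
For `ρ > 0`, the inequality `ρ > log₂ (1 + ζ / τ)` is equivalent to `α * ζ < τ`, so above capacity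
the argument of `Q` is a negative multiple of `√N` and tends to `-∞`. Since `1 - Q` is the
distribution function of the standard normal law, `p_e → 1`; as that law charges every half-line,
`p_e < 1` for each `N`, so `1 - p_e` tends to `0` from above and the age of information to `+∞`.
-/

section GaussianTail

open MeasureTheory ProbabilityTheory

lemma cdf_pos_of_isOpenPosMeasure (μ : Measure ℝ) [IsProbabilityMeasure μ] [μ.IsOpenPosMeasure]
    (x : ℝ) : 0 < cdf μ x := by
  rw [cdf_eq_real]
  exact ENNReal.toReal_pos (Measure.measure_pos_of_nonempty_interior μ (by simp)).ne'
    (measure_ne_top μ _)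

lemma isOpenPosMeasure_gaussianReal (m : ℝ) {v : NNReal} (hv : v ≠ 0) :
    (gaussianReal m v).IsOpenPosMeasure :=
  (gaussianReal_absolutelyContinuous' m hv).isOpenPosMeasure

lemma gaussQ_eq_measureReal_Ioi (x : ℝ) : gaussQ x = (gaussianReal 0 1).real (Set.Ioi x) := by
  have pdf_eq (t : ℝ) :
      gaussianPDFReal 0 1 t = (Real.sqrt (2 * Real.pi))⁻¹ * Real.exp (-t ^ 2 / 2) := by
    simp [gaussianPDFReal]
  rw [measureReal_def, gaussianReal_apply_eq_integral 0 one_ne_zero,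
    ENNReal.toReal_ofReal (integral_nonneg (gaussianPDFReal_nonneg 0 1))]
  simp only [pdf_eq, integral_const_mul, gaussQ]

lemma gaussQ_eq_one_sub_cdf (x : ℝ) : gaussQ x = 1 - cdf (gaussianReal 0 1) x := by
  rw [gaussQ_eq_measureReal_Ioi, cdf_eq_real, ← Set.compl_Iic,
    probReal_compl_eq_one_sub measurableSet_Iic]

lemma gaussQ_lt_one (x : ℝ) : gaussQ x < 1 := by
  have := isOpenPosMeasure_gaussianReal 0 one_ne_zero
  rw [gaussQ_eq_one_sub_cdf]
  exact sub_lt_self 1 (cdf_pos_of_isOpenPosMeasure _ x)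

lemma tendsto_gaussQ_atBot : Tendsto gaussQ atBot (𝓝 1) := by
  simpa only [← gaussQ_eq_one_sub_cdf, sub_zero] using
    (tendsto_cdf_atBot (gaussianReal 0 1)).const_sub 1

end GaussianTail

lemma one_div_rpow_sub_one_mul_lt_iff {b τ ζ ρ : ℝ} (hb : 1 < b) (hτ : 0 < τ) (hζ : -τ < ζ)
    (hρ : 0 < ρ) : 1 / (b ^ ρ - 1) * ζ < τ ↔ Real.logb b (1 + ζ / τ) < ρ := by
  have hpow : 0 < b ^ ρ - 1 := sub_pos.2 (Real.one_lt_rpow hb hρ)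
  have hsum : 0 < 1 + ζ / τ := by
    rw [one_add_div hτ.ne']
    exact div_pos (neg_lt_iff_pos_add'.1 hζ) hτ
  rw [Real.logb_lt_iff_lt_rpow hb hsum, one_div_mul_eq_div, div_lt_comm₀ hpow hτ,
    lt_sub_iff_add_lt']

lemma tendsto_one_div_mul_one_sub_atTop {ι 𝕜 : Type*} [Field 𝕜] [LinearOrder 𝕜]
    [IsStrictOrderedRing 𝕜] [TopologicalSpace 𝕜] [OrderTopology 𝕜] {l : Filter ι} {p : ι → 𝕜}
    {c : 𝕜} (hc : 0 < c) (hp : Tendsto p l (𝓝 1)) (hp_lt : ∀ᶠ i in l, p i < 1) :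
    Tendsto (fun i => 1 / (c * (1 - p i))) l atTop := by
  have h_zero : Tendsto (fun i => c * (1 - p i)) l (𝓝 0) := by
    simpa only [sub_self, mul_zero] using (hp.const_sub 1).const_mul c
  have h_pos : ∀ᶠ i in l, 0 < c * (1 - p i) :=
    hp_lt.mono fun _ hi => mul_pos hc (sub_pos.2 hi)
  simp only [one_div]
  exact (tendsto_nhdsWithin_iff.2 ⟨h_zero, h_pos⟩).inv_tendsto_nhdsGT_zero

theorem age_limited_capacity_strong_converse_general
    (τ ζ ρ : ℝ) (hτ : 0 < τ) (hζ : 0 ≤ ζ)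
    (hρC : ρ > Real.logb 2 (1 + ζ / τ))
    (α : ℝ) (hα : α = 1 / ((2 : ℝ) ^ ρ - 1))
    (pe : ℕ → ℝ)
    (hpe : ∀ N : ℕ, pe N =
      gaussQ (Real.sqrt N * (α * ζ - τ) / Real.sqrt (α ^ 2 * ζ + τ))) :
    Tendsto pe atTop (𝓝 1) ∧
      Tendsto (fun N : ℕ => 1 / (τ * (1 - pe N))) atTop atTop := by
  have hρ : 0 < ρ :=
    (Real.logb_nonneg one_lt_two (le_add_of_nonneg_right (div_nonneg hζ hτ.le))).trans_lt hρC
  have h_drift : α * ζ - τ < 0 := by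
    rw [hα, sub_neg]
    exact (one_div_rpow_sub_one_mul_lt_iff one_lt_two hτ (by linarith) hρ).2 hρC
  have h_scale : 0 < Real.sqrt (α ^ 2 * ζ + τ) := by positivity
  have h_arg : Tendsto
      (fun N : ℕ => Real.sqrt N * (α * ζ - τ) / Real.sqrt (α ^ 2 * ζ + τ)) atTop atBot :=
    ((Real.tendsto_sqrt_atTop.comp tendsto_natCast_atTop_atTop).atTop_mul_const_of_neg
      h_drift).atBot_div_const h_scale
  have h_pe : Tendsto pe atTop (𝓝 1) := by
    rw [funext hpe]
    exact tendsto_gaussQ_atBot.comp h_arg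
  have h_lt (N : ℕ) : pe N < 1 := (hpe N).trans_lt (gaussQ_lt_one _)
  exact ⟨h_pe, tendsto_one_div_mul_one_sub_atTop hτ h_pe (.of_forall h_lt)⟩

/-- Strong converse (Theorem 3): for any spectral efficiency `ρ` above the age-limited
capacity `C = log₂(1 + ζ/τ)`, the asymptotic packet error probability
`p_e(N) = Q(√N (αζ − τ)/√(α²ζ + τ))` (with `α = 1/(2^ρ − 1)`) tends to `1`, and the
asymptotic age of information `Δ(N) = 1/(τ(1 − p_e(N)))` tends to `+∞`, as `N → ∞`. -/
theorem age_limited_capacity_strong_converse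
    (τ ζ ρ : ℝ) (hτ0 : 0 < τ) (hτ1 : τ < 1) (hζ : 0 < ζ)
    (hρC : ρ > Real.logb 2 (1 + ζ / τ))
    (α : ℝ) (hα : α = 1 / ((2 : ℝ) ^ ρ - 1))
    (pe : ℕ → ℝ)
    (hpe : ∀ N : ℕ, pe N =
      gaussQ (Real.sqrt N * (α * ζ - τ) / Real.sqrt (α ^ 2 * ζ + τ))) :
    Tendsto pe atTop (𝓝 1) ∧
      Tendsto (fun N : ℕ => 1 / (τ * (1 - pe N))) atTop atTop :=
  age_limited_capacity_strong_converse_general τ ζ ρ hτ0 hζ.le hρC α hα pe hpe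
end

section
/- Let τ ∈ (0,1), ζ > 0, C = log₂(1 + ζ/τ), and let δ satisfy 0 < δ < C. With α = 1/(2^{C−δ} − 1), the quantity φ := (α·ζ − τ)/√(α²·ζ + τ) satisfies the identity φ = (ζ + τ)(1 − 2^{−δ})/√(ζ + τ·(2^{C−δ} − 1)²), and in particular φ > 0. -/
/-!
Multiplying the numerator and denominator of `φ` by `x = 2 ^ (C - δ) - 1 > 0` clears `α = 1 / x`.
At capacity `τ * 2 ^ C = ζ + τ`, so the new numerator `ζ - τ * x = (ζ + τ) - τ * 2 ^ (C - δ)`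
factors as `(ζ + τ) * (1 - 2 ^ (-δ))`, whose sign is that of `δ`.
-/

/-- The age-limited capacity `C_{τ,ζ}`, in bits, for attempt probability `τ` and antenna-to-user
ratio `ζ`. -/
noncomputable def ageLimitedCapacity (τ ζ : ℝ) : ℝ :=
  Real.logb 2 (1 + ζ / τ)

/-- The coefficient `α_ρ` of the spectral efficiency `ρ`: the reciprocal of the signal-to-noise
ratio `2 ^ ρ - 1` at which the Gaussian channel has capacity `ρ`. At `ρ = 0` it is the junk
value `0`. -/
noncomputable def spectralCoeff (ρ : ℝ) : ℝ :=
  1 / ((2 : ℝ) ^ ρ - 1)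

/-- The normalized argument `φ(ρ)` of the Gaussian tail function in the asymptotic packet error
probability, with the dependence on `τ` and `ζ` made explicit. -/
noncomputable def gaussianTailArg (τ ζ ρ : ℝ) : ℝ :=
  (spectralCoeff ρ * ζ - τ) / Real.sqrt (spectralCoeff ρ ^ 2 * ζ + τ)

theorem sqrt_one_div_sq_mul_add {x : ℝ} (hx : 0 < x) (ζ τ : ℝ) :
    Real.sqrt ((1 / x) ^ 2 * ζ + τ) = Real.sqrt (ζ + τ * x ^ 2) / x := by
  have hfactor : (1 / x) ^ 2 * ζ + τ = (ζ + τ * x ^ 2) / x ^ 2 := by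
    field_simp
  rw [hfactor, Real.sqrt_div' _ (sq_nonneg x), Real.sqrt_sq hx.le]

theorem gaussianTailArg_eq_div_sqrt (τ ζ : ℝ) {ρ : ℝ} (hρ : 0 < ρ) :
    gaussianTailArg τ ζ ρ =
      (ζ - τ * ((2 : ℝ) ^ ρ - 1)) / Real.sqrt (ζ + τ * ((2 : ℝ) ^ ρ - 1) ^ 2) := by
  have hx : 0 < (2 : ℝ) ^ ρ - 1 := sub_pos.2 (Real.one_lt_rpow one_lt_two hρ)
  have hnum : 1 / ((2 : ℝ) ^ ρ - 1) * ζ - τ =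
      (ζ - τ * ((2 : ℝ) ^ ρ - 1)) / ((2 : ℝ) ^ ρ - 1) := by
    field_simp
  rw [gaussianTailArg, spectralCoeff, sqrt_one_div_sq_mul_add hx, hnum,
    div_div_div_cancel_right₀ hx.ne']

theorem mul_two_rpow_ageLimitedCapacity {τ ζ : ℝ} (hτ : 0 < τ) (hζ : 0 < ζ) :
    τ * (2 : ℝ) ^ ageLimitedCapacity τ ζ = ζ + τ := by
  rw [ageLimitedCapacity, Real.rpow_logb two_pos (by norm_num) (by positivity)]
  field_simp
  ring

theorem sub_mul_two_rpow_ageLimitedCapacity_sub {τ ζ : ℝ} (hτ : 0 < τ) (hζ : 0 < ζ) (δ : ℝ) :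
    ζ - τ * ((2 : ℝ) ^ (ageLimitedCapacity τ ζ - δ) - 1) = (ζ + τ) * (1 - (2 : ℝ) ^ (-δ)) := by
  rw [sub_eq_add_neg (ageLimitedCapacity τ ζ), Real.rpow_add two_pos]
  linear_combination -(2 : ℝ) ^ (-δ) * mul_two_rpow_ageLimitedCapacity hτ hζ

theorem one_sub_rpow_neg_pos_iff {b : ℝ} (hb : 1 < b) {δ : ℝ} : 0 < 1 - b ^ (-δ) ↔ 0 < δ := by
  rw [sub_pos, ← Real.rpow_zero b, Real.rpow_lt_rpow_left_iff hb, neg_lt_zero]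

theorem phi_below_capacity_identity_general {τ ζ δ : ℝ} (hτ : 0 < τ) (hζ : 0 < ζ)
    (hδC : δ < ageLimitedCapacity τ ζ) :
    gaussianTailArg τ ζ (ageLimitedCapacity τ ζ - δ) =
        (ζ + τ) * (1 - (2 : ℝ) ^ (-δ)) /
          Real.sqrt (ζ + τ * ((2 : ℝ) ^ (ageLimitedCapacity τ ζ - δ) - 1) ^ 2) ∧
      (0 < gaussianTailArg τ ζ (ageLimitedCapacity τ ζ - δ) ↔ 0 < δ) := by
  have hφ := gaussianTailArg_eq_div_sqrt τ ζ (sub_pos.2 hδC)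
  rw [sub_mul_two_rpow_ageLimitedCapacity_sub hτ hζ] at hφ
  have hsqrt : 0 < Real.sqrt (ζ + τ * ((2 : ℝ) ^ (ageLimitedCapacity τ ζ - δ) - 1) ^ 2) :=
    Real.sqrt_pos.2 (by positivity)
  refine ⟨hφ, ?_⟩
  rw [hφ, div_pos_iff_of_pos_right hsqrt, mul_pos_iff_of_pos_left (add_pos hζ hτ),
    one_sub_rpow_neg_pos_iff one_lt_two]

/-- Key identity in the proof of the achievability theorem (Theorem 2, eq. (31)):
below capacity, the normalized Q-function argument `φ = (αζ − τ)/√(α²ζ + τ)` with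
`α = 1/(2^{C−δ} − 1)` equals `(ζ + τ)(1 − 2^{−δ})/√(ζ + τ(2^{C−δ} − 1)²)`,
which is positive. -/
theorem phi_below_capacity_identity
    (τ ζ δ : ℝ) (hτ0 : 0 < τ) (hτ1 : τ < 1) (hζ : 0 < ζ)
    (C : ℝ) (hC : C = Real.logb 2 (1 + ζ / τ))
    (hδ0 : 0 < δ) (hδC : δ < C)
    (α : ℝ) (hα : α = 1 / ((2 : ℝ) ^ (C - δ) - 1))
    (φ : ℝ) (hφ : φ = (α * ζ - τ) / Real.sqrt (α ^ 2 * ζ + τ)) :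
    φ = (ζ + τ) * (1 - (2 : ℝ) ^ (-δ)) /
        Real.sqrt (ζ + τ * ((2 : ℝ) ^ (C - δ) - 1) ^ 2) ∧ 0 < φ := by
  subst hC hα hφ
  obtain ⟨hφ, hpos_iff⟩ := phi_below_capacity_identity_general hτ0 hζ hδC
  exact ⟨hφ, hpos_iff.2 hδ0⟩
end

section
/- Let τ ∈ (0,1), ζ > 0, C = log₂(1 + ζ/τ), and let δ > 0. With α = 1/(2^{C+δ} − 1), the quantity φ := (α·ζ − τ)/√(α²·ζ + τ) satisfies the identity φ = −(ζ + τ)(2^{δ} − 1)/√(ζ + τ·(2^{C+δ} − 1)²), and in particular φ < 0. -/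
/-!
Scaling the numerator and denominator of `φ` by `s = 2 ^ (C + δ) - 1 > 0` removes `α = 1 / s`
and leaves `φ = (ζ - τ s) / √(ζ + τ s²)`. The capacity `C` is the exponent at which `ζ - τ s`
vanishes: `1 + s = (1 + ζ / τ) 2 ^ δ`, so `ζ - τ s = -(ζ + τ) (2 ^ δ - 1)`, and the sign of `φ` is
opposite to that of `δ`.
-/

theorem one_div_mul_sub_div_sqrt {s : ℝ} (hs : 0 < s) (τ ζ : ℝ) :
    (1 / s * ζ - τ) / √((1 / s) ^ 2 * ζ + τ) = (ζ - τ * s) / √(ζ + τ * s ^ 2) := by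
  have h_num : 1 / s * ζ - τ = (ζ - τ * s) / s := by
    field_simp
  have h_den : √((1 / s) ^ 2 * ζ + τ) = √(ζ + τ * s ^ 2) / s := by
    calc √((1 / s) ^ 2 * ζ + τ) = √((ζ + τ * s ^ 2) / s ^ 2) := by
          congr 1
          field_simp
      _ = √(ζ + τ * s ^ 2) / s := by
          rw [Real.sqrt_div' _ (sq_nonneg s), Real.sqrt_sq hs.le]
  rw [h_num, h_den, div_div_div_cancel_right₀ hs.ne']

theorem sub_mul_rpow_logb_one_add_div_add_sub_one {b τ ζ : ℝ} (hb : 0 < b) (hb1 : b ≠ 1)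
    (hτ : τ ≠ 0) (hζτ : 0 < 1 + ζ / τ) (δ : ℝ) :
    ζ - τ * (b ^ (Real.logb b (1 + ζ / τ) + δ) - 1) = -((ζ + τ) * (b ^ δ - 1)) := by
  rw [Real.rpow_add hb, Real.rpow_logb hb hb1 hζτ]
  field_simp
  ring

theorem logb_one_add_div_pos {b τ ζ : ℝ} (hb : 1 < b) (hζτ : 0 < ζ / τ) :
    0 < Real.logb b (1 + ζ / τ) :=
  Real.logb_pos hb (lt_add_of_pos_right 1 hζτ)

theorem neg_mul_rpow_sub_one_div_neg_iff {b c d δ : ℝ} (hb : 1 < b) (hc : 0 < c) (hd : 0 < d) :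
    -(c * (b ^ δ - 1) / d) < 0 ↔ 0 < δ := by
  rw [neg_lt_zero, div_pos_iff_of_pos_right hd, mul_pos_iff_of_pos_left hc, sub_pos,
    ← Real.rpow_zero b, Real.rpow_lt_rpow_left_iff hb]

theorem phi_above_capacity_identity_general {b τ ζ δ C α φ : ℝ}
    (hb : 1 < b) (hτ : 0 < τ) (hζ : 0 < ζ) (hC : C = Real.logb b (1 + ζ / τ))
    (hCδ : 0 < C + δ) (hα : α = 1 / (b ^ (C + δ) - 1))
    (hφ : φ = (α * ζ - τ) / √(α ^ 2 * ζ + τ)) :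
    φ = -((ζ + τ) * (b ^ δ - 1) / √(ζ + τ * (b ^ (C + δ) - 1) ^ 2)) ∧ (φ < 0 ↔ 0 < δ) := by
  have hs : 0 < b ^ (C + δ) - 1 := sub_pos.mpr (Real.one_lt_rpow hb hCδ)
  have h_num : ζ - τ * (b ^ (C + δ) - 1) = -((ζ + τ) * (b ^ δ - 1)) := by
    rw [hC]
    exact sub_mul_rpow_logb_one_add_div_add_sub_one (zero_lt_one.trans hb) hb.ne' hτ.ne'
      (by positivity) δ
  have h_eq : φ = -((ζ + τ) * (b ^ δ - 1) / √(ζ + τ * (b ^ (C + δ) - 1) ^ 2)) := by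
    rw [hφ, hα, one_div_mul_sub_div_sqrt hs, h_num, neg_div]
  refine ⟨h_eq, ?_⟩
  rw [h_eq]
  exact neg_mul_rpow_sub_one_div_neg_iff hb (by positivity) (by positivity)

/-- Key identity in the proof of the strong converse (Theorem 3):
above capacity, the normalized Q-function argument `φ = (αζ − τ)/√(α²ζ + τ)` with
`α = 1/(2^{C+δ} − 1)` equals `−(ζ + τ)(2^{δ} − 1)/√(ζ + τ(2^{C+δ} − 1)²)`,
which is negative. -/
theorem phi_above_capacity_identity
    (τ ζ δ : ℝ) (hτ0 : 0 < τ) (hτ1 : τ < 1) (hζ : 0 < ζ)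
    (C : ℝ) (hC : C = Real.logb 2 (1 + ζ / τ))
    (hδ0 : 0 < δ)
    (α : ℝ) (hα : α = 1 / ((2 : ℝ) ^ (C + δ) - 1))
    (φ : ℝ) (hφ : φ = (α * ζ - τ) / Real.sqrt (α ^ 2 * ζ + τ)) :
    φ = -((ζ + τ) * ((2 : ℝ) ^ δ - 1) /
        Real.sqrt (ζ + τ * ((2 : ℝ) ^ (C + δ) - 1) ^ 2)) ∧ φ < 0 := by
  have hC0 : 0 < C := hC ▸ logb_one_add_div_pos one_lt_two (div_pos hζ hτ0)
  exact (phi_above_capacity_identity_general one_lt_two hτ0 hζ hC (add_pos hC0 hδ0) hα hφ).imp_right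
    fun h_neg_iff => h_neg_iff.mpr hδ0
end

section
/- Let N > 0, τ ∈ (0,1), ζ > 0 and q > 0 with N·ζ > q². Define D := 1 − (1 − q²/(N·ζ))·(1 − q²/(N·τ)) and α⁺ := τ·(1 + √D)/(ζ − q²/N). Then D > 0, and for every α ≥ 0: √N·(α·ζ − τ) > q·√(α²·ζ + τ) if and only if α > α⁺. -/
/-!
Write `p = q² / N`. The inequality forces `α ζ > τ`, and for such `α` squaring turns it into
positivity of the quadratic
`Q(α) = (α ζ - τ)² - p (α² ζ + τ) = ζ (ζ - p) α² - 2 ζ τ α + τ (τ - p)`.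
Its leading coefficient is positive and its discriminant is `(2 ζ τ)² D`. Since `Q(τ / ζ) < 0`, the
discriminant is positive and `τ / ζ` lies strictly between the two roots, so `α > τ / ζ` and
`Q(α) > 0` hold together exactly when `α` exceeds the larger root `α⁺`.
-/

section Quadratic

theorem four_mul_mul_quadratic_eq_sq_sub_discrim {R : Type*} [CommRing R] (a b c x : R) :
    4 * a * (a * (x * x) + b * x + c) = (2 * a * x + b) ^ 2 - discrim a b c := by
  rw [discrim]
  ring

section OrderedRing

variable {R : Type*} [CommRing R] [LinearOrder R] [IsStrictOrderedRing R] {a b c m x : R}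

theorem quadratic_pos_iff_discrim_lt_sq (ha : 0 < a) :
    0 < a * (x * x) + b * x + c ↔ discrim a b c < (2 * a * x + b) ^ 2 := by
  rw [← mul_pos_iff_of_pos_left (show 0 < 4 * a by positivity),
    four_mul_mul_quadratic_eq_sq_sub_discrim, sub_pos]

theorem quadratic_neg_iff_sq_lt_discrim (ha : 0 < a) :
    a * (x * x) + b * x + c < 0 ↔ (2 * a * x + b) ^ 2 < discrim a b c := by
  rw [← smul_neg_iff_of_pos_left (show 0 < 4 * a by positivity), smul_eq_mul,
    four_mul_mul_quadratic_eq_sq_sub_discrim, sub_neg]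

theorem discrim_pos_of_quadratic_neg (ha : 0 < a) (hm : a * (m * m) + b * m + c < 0) :
    0 < discrim a b c :=
  (sq_nonneg _).trans_lt ((quadratic_neg_iff_sq_lt_discrim ha).mp hm)

end OrderedRing

variable {K : Type*} [Field K] [LinearOrder K] [IsStrictOrderedRing K] {a b c s m x : K}

theorem lt_and_quadratic_pos_iff_larger_root_lt (ha : 0 < a) (hs : 0 ≤ s)
    (hdiscrim : discrim a b c = s * s) (hm : a * (m * m) + b * m + c < 0) :
    m < x ∧ 0 < a * (x * x) + b * x + c ↔ (-b + s) / (2 * a) < x := by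
  rw [quadratic_neg_iff_sq_lt_discrim ha, hdiscrim, ← sq] at hm
  obtain ⟨hm_left, hm_right⟩ := abs_lt_of_sq_lt_sq' hm hs
  have hmono : m < x ↔ 2 * a * m < 2 * a * x := (mul_lt_mul_iff_right₀ (by positivity)).symm
  rw [quadratic_pos_iff_discrim_lt_sq ha, hdiscrim, ← sq, sq_lt_sq, abs_of_nonneg hs, hmono,
    div_lt_iff₀' (by positivity), lt_abs]
  constructor
  · rintro ⟨hmx, hright | hleft⟩ <;> linarith
  · intro hx
    exact ⟨by linarith, Or.inl (by linarith)⟩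

end Quadratic

section TargetQuadratic

theorem target_quadratic_eq {R : Type*} [CommRing R] (p ζ τ α : R) :
    ζ * (ζ - p) * (α * α) + -(2 * ζ * τ) * α + τ * (τ - p) =
      (α * ζ - τ) ^ 2 - p * (α ^ 2 * ζ + τ) := by
  ring

theorem discrim_target_quadratic {K : Type*} [Field K] {p ζ τ : K} (hζ : ζ ≠ 0) (hτ : τ ≠ 0) :
    discrim (ζ * (ζ - p)) (-(2 * ζ * τ)) (τ * (τ - p)) =
      (2 * ζ * τ) ^ 2 * (1 - (1 - p / ζ) * (1 - p / τ)) := by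
  rw [discrim]
  field_simp
  ring

variable {K : Type*} [Field K] [LinearOrder K] [IsStrictOrderedRing K] {p ζ τ s α : K}

theorem target_quadratic_neg (hp : 0 < p) (hζ : 0 < ζ) (hτ : 0 < τ) :
    ζ * (ζ - p) * (τ / ζ * (τ / ζ)) + -(2 * ζ * τ) * (τ / ζ) + τ * (τ - p) < 0 := by
  rw [target_quadratic_eq, div_mul_cancel₀ τ hζ.ne', sub_self, zero_pow two_ne_zero, zero_sub]
  exact neg_neg_of_pos (by positivity)

theorem target_discrim_pos (hp : 0 < p) (hpζ : p < ζ) (hτ : 0 < τ) :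
    0 < 1 - (1 - p / ζ) * (1 - p / τ) := by
  have hζ : 0 < ζ := hp.trans hpζ
  have hdiscrim := discrim_pos_of_quadratic_neg (mul_pos hζ (sub_pos.mpr hpζ))
    (target_quadratic_neg hp hζ hτ)
  rw [discrim_target_quadratic hζ.ne' hτ.ne'] at hdiscrim
  exact pos_of_mul_pos_right hdiscrim (sq_nonneg _)

theorem pos_and_mul_lt_sq_iff_larger_root_lt (hp : 0 < p) (hpζ : p < ζ) (hτ : 0 < τ) (hs : 0 ≤ s)
    (hs_sq : s ^ 2 = 1 - (1 - p / ζ) * (1 - p / τ)) :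
    0 < α * ζ - τ ∧ p * (α ^ 2 * ζ + τ) < (α * ζ - τ) ^ 2 ↔ τ * (1 + s) / (ζ - p) < α := by
  have hζ : 0 < ζ := hp.trans hpζ
  have hζp : 0 < ζ - p := sub_pos.mpr hpζ
  have hdiscrim : discrim (ζ * (ζ - p)) (-(2 * ζ * τ)) (τ * (τ - p)) =
      (2 * ζ * τ * s) * (2 * ζ * τ * s) := by
    rw [discrim_target_quadratic hζ.ne' hτ.ne', ← hs_sq]
    ring
  have hroot : τ * (1 + s) / (ζ - p) =
      (- -(2 * ζ * τ) + 2 * ζ * τ * s) / (2 * (ζ * (ζ - p))) := by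
    field_simp
  rw [hroot, ← lt_and_quadratic_pos_iff_larger_root_lt (mul_pos hζ hζp) (by positivity) hdiscrim
    (target_quadratic_neg hp hζ hτ), target_quadratic_eq, sub_pos, sub_pos, div_lt_iff₀ hζ]

end TargetQuadratic

theorem sqrt_lt_iff_pos_and_lt_sq {x y : ℝ} : √x < y ↔ 0 < y ∧ x < y ^ 2 := by
  constructor
  · intro h
    have hy : 0 < y := (Real.sqrt_nonneg x).trans_lt h
    exact ⟨hy, (Real.sqrt_lt' hy).mp h⟩
  · rintro ⟨hy, h⟩
    exact (Real.sqrt_lt' hy).mpr h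

theorem mul_sqrt_lt_sqrt_mul_iff_pos_and_lt_sq {N q x y : ℝ} (hN : 0 < N) (hq : 0 ≤ q) :
    q * √y < √N * x ↔ 0 < x ∧ q ^ 2 / N * y < x ^ 2 := by
  have hsqrt : √(q ^ 2 / N * y) = q * √y / √N := by
    rw [Real.sqrt_mul (by positivity), Real.sqrt_div (sq_nonneg q), Real.sqrt_sq hq,
      div_mul_eq_mul_div]
  rw [← sqrt_lt_iff_pos_and_lt_sq, hsqrt, div_lt_iff₀' (Real.sqrt_pos.mpr hN)]

theorem error_target_iff_alpha_gt_alpha_plus_general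
    (N τ ζ q : ℝ) (hN : 0 < N) (hτ : 0 < τ) (hq : 0 < q) (h : N * ζ > q ^ 2)
    (D : ℝ) (hD : D = 1 - (1 - q ^ 2 / (N * ζ)) * (1 - q ^ 2 / (N * τ)))
    (αplus : ℝ) (hαplus : αplus = τ * (1 + Real.sqrt D) / (ζ - q ^ 2 / N)) :
    0 < D ∧
      ∀ α : ℝ,
        (Real.sqrt N * (α * ζ - τ) > q * Real.sqrt (α ^ 2 * ζ + τ) ↔ α > αplus) := by
  have hp : 0 < q ^ 2 / N := by positivity
  have hpζ : q ^ 2 / N < ζ := (div_lt_iff₀' hN).mpr h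
  rw [← div_div, ← div_div] at hD
  have hD_pos : 0 < D := hD ▸ target_discrim_pos hp hpζ hτ
  refine ⟨hD_pos, fun α ↦ ?_⟩
  rw [hαplus]
  exact (mul_sqrt_lt_sqrt_mul_iff_pos_and_lt_sq hN hq.le).trans <|
    pos_and_mul_lt_sq_iff_larger_root_lt hp hpζ hτ (Real.sqrt_nonneg D)
      ((Real.sq_sqrt hD_pos.le).trans hD)

/-- Case 1 of Appendix C: when `Nζ > q²`, the discriminant quantity
`D = 1 − (1 − q²/(Nζ))(1 − q²/(Nτ))` is positive, and for nonnegative `α` the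
inequality `√N (αζ − τ) > q √(α²ζ + τ)` holds iff `α` exceeds the larger root
`α⁺ = τ(1 + √D)/(ζ − q²/N)`. -/
theorem error_target_iff_alpha_gt_alpha_plus
    (N τ ζ q : ℝ) (hN : 0 < N) (hτ0 : 0 < τ) (hτ1 : τ < 1) (hζ : 0 < ζ)
    (hq : 0 < q) (h : N * ζ > q ^ 2)
    (D : ℝ) (hD : D = 1 - (1 - q ^ 2 / (N * ζ)) * (1 - q ^ 2 / (N * τ)))
    (αplus : ℝ) (hαplus : αplus = τ * (1 + Real.sqrt D) / (ζ - q ^ 2 / N)) :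
    0 < D ∧
      ∀ α : ℝ, 0 ≤ α →
        (Real.sqrt N * (α * ζ - τ) > q * Real.sqrt (α ^ 2 * ζ + τ) ↔ α > αplus) := by
  obtain ⟨hD_pos, hiff⟩ :=
    error_target_iff_alpha_gt_alpha_plus_general N τ ζ q hN hτ0 hq h D hD αplus hαplus
  exact ⟨hD_pos, fun α _ ↦ hiff α⟩
end

section
/- Fix α > 0. There exists a constant C > 0 (depending only on α) such that for all integers M ≥ 1 and k ≥ 0, for independent random variables S and X where S has the Gamma distribution with shape M and scale α and X has the Gamma distribution with shape k and scale 1 (X ≡ 0 when k = 0), and for every real β: | P(S − X ≥ β) − Q( (β − α·M + k)/√(α²·M + k) ) | ≤ C/√(M + k). -/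
/-!
The proof is Stein's method with *Stein coefficients*. Integration by parts against the Gamma
density of shape `a` and scale `θ` gives `E[(S - θ a) g(S)] = E[θ S g'(S)]`, so the centred variable
has the coefficient `θ S`. Coefficients of independent variables add up, so `W = S - X - E[S - X]`
has the coefficient `T = α S + X`, with `E[T] = Var W = σ²`. Stein's equation for the indicator of a
half-line has a bounded solution with derivative at most `2` in absolute value, and testing on it
yields `|P(W ≥ x) - Q(x / σ)| ≤ 2 E|1 - T / σ²| ≤ 2 √(Var T) / σ²`. Finally
`Var T = α⁴ M + k ≤ max(α, 1)² σ²`, while `σ²` is at least a constant times `M + k`.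
-/

open MeasureTheory ProbabilityTheory

open Filter Set Topology

/-! ### The Gaussian tail and the Stein equation -/

section StdGaussian

local notation "φ" => gaussianPDFReal 0 1

lemma continuous_gaussianPDFReal (μ : ℝ) (v : NNReal) : Continuous (gaussianPDFReal μ v) := by
  unfold gaussianPDFReal
  fun_prop

lemma hasDerivAt_stdGaussianPDFReal (x : ℝ) : HasDerivAt φ (-x * φ x) x := by
  simp only [gaussianPDFReal_def, sub_zero]
  refine ((((hasDerivAt_pow 2 x).neg.div_const _).exp).const_mul _).congr_deriv ?_
  simp only [Pi.neg_apply, NNReal.coe_one]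
  ring

lemma tendsto_stdGaussianPDFReal_atTop : Tendsto φ atTop (𝓝 0) := by
  have hexp : Tendsto (fun x : ℝ => Real.exp (-(x ^ 2 / 2))) atTop (𝓝 0) :=
    Real.tendsto_exp_neg_atTop_nhds_zero.comp
      ((tendsto_pow_atTop two_ne_zero).atTop_div_const two_pos)
  simpa [gaussianPDFReal_def, neg_div] using hexp.const_mul (√(2 * Real.pi))⁻¹

lemma gaussQ_eq_setIntegral (x : ℝ) : gaussQ x = ∫ t in Ioi x, φ t := by
  simp [gaussQ, gaussianPDFReal_def, integral_const_mul]

lemma gaussQ_eq_measureReal (x : ℝ) : gaussQ x = (gaussianReal 0 1).real (Ioi x) := by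
  rw [gaussQ_eq_setIntegral, measureReal_def, gaussianReal_apply_eq_integral 0 one_ne_zero,
    ENNReal.toReal_ofReal (setIntegral_nonneg measurableSet_Ioi
      fun t _ => gaussianPDFReal_nonneg 0 1 t)]

lemma gaussQ_nonneg (x : ℝ) : 0 ≤ gaussQ x :=
  gaussQ_eq_measureReal x ▸ measureReal_nonneg

lemma gaussQ_le_one (x : ℝ) : gaussQ x ≤ 1 :=
  gaussQ_eq_measureReal x ▸ measureReal_le_one

lemma antitone_gaussQ : Antitone gaussQ := fun x y hxy => by
  simpa only [gaussQ_eq_measureReal] using measureReal_mono (Ioi_subset_Ioi hxy)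

lemma gaussQ_neg (x : ℝ) : gaussQ (-x) = 1 - gaussQ x := by
  have := nullSingletonClass_gaussianReal (μ := 0) (v := 1) one_ne_zero
  calc gaussQ (-x) = ((gaussianReal 0 1).map Neg.neg).real (Ioi (-x)) := by
        rw [gaussQ_eq_measureReal, gaussianReal_map_neg, neg_zero]
    _ = (gaussianReal 0 1).real (Iio x) := by
        rw [map_measureReal_apply measurable_neg measurableSet_Ioi]
        simp
    _ = (gaussianReal 0 1).real (Ioi x)ᶜ := by
        rw [compl_Ioi]
        exact measureReal_congr Iio_ae_eq_Iic
    _ = 1 - gaussQ x := by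
        rw [probReal_compl_eq_one_sub measurableSet_Ioi, gaussQ_eq_measureReal]

lemma hasDerivAt_gaussQ (x : ℝ) : HasDerivAt gaussQ (-φ x) x := by
  have gaussQ_eq : gaussQ = fun y => gaussQ 0 - ∫ t in (0 : ℝ)..y, φ t := by
    ext y
    have := intervalIntegral.integral_interval_add_Ioi (a := 0) (b := y)
      (integrable_gaussianPDFReal 0 1).integrableOn (integrable_gaussianPDFReal 0 1).integrableOn
    rw [gaussQ_eq_setIntegral, gaussQ_eq_setIntegral]
    linarith
  rw [gaussQ_eq]
  exact ((continuous_gaussianPDFReal 0 1).integral_hasStrictDerivAt 0 x).hasDerivAt.const_sub _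

lemma continuous_gaussQ : Continuous gaussQ :=
  continuous_iff_continuousAt.2 fun x => (hasDerivAt_gaussQ x).continuousAt

lemma mul_gaussQ_le {x : ℝ} (hx : 0 ≤ x) : x * gaussQ x ≤ φ x := by
  have hderiv (t : ℝ) : HasDerivAt (fun t => -φ t) (t * φ t) t :=
    (hasDerivAt_stdGaussianPDFReal t).neg.congr_deriv (by ring)
  have hlim : Tendsto (fun t => -φ t) atTop (𝓝 0) := by
    simpa using tendsto_stdGaussianPDFReal_atTop.neg
  have hint : IntegrableOn (fun t => t * φ t) (Ioi x) :=
    integrableOn_Ioi_deriv_of_nonneg' (fun t _ => hderiv t)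
      (fun t ht => mul_nonneg (hx.trans ht.le) (gaussianPDFReal_nonneg 0 1 t)) hlim
  calc x * gaussQ x = ∫ t in Ioi x, x * φ t := by
        rw [gaussQ_eq_setIntegral, integral_const_mul]
    _ ≤ ∫ t in Ioi x, t * φ t :=
        setIntegral_mono_on ((integrable_gaussianPDFReal 0 1).integrableOn.const_mul x) hint
          measurableSet_Ioi
          fun t ht => mul_le_mul_of_nonneg_right ht.le (gaussianPDFReal_nonneg 0 1 t)
    _ = φ x := by
        rw [integral_Ioi_of_hasDerivAt_of_tendsto' (fun t _ => hderiv t) hint hlim]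
        ring

/-- The solution `f` of Stein's equation `f'(w) - w f(w) = 1_{x ≤ w} - Q(x)` that is bounded in `w`.
The variable `max x w` merges the formulas for `w ≤ x` and `x ≤ w`. -/
noncomputable def steinSol (x w : ℝ) : ℝ :=
  -(gaussQ (max x w) - gaussQ x * gaussQ w) / φ w

/-- The derivative of `steinSol x`, extended to the kink `w = x` by Stein's equation. -/
noncomputable def steinSolDeriv (x w : ℝ) : ℝ :=
  w * steinSol x w + ((Ici x).indicator 1 w - gaussQ x)

lemma continuous_steinSol (x : ℝ) : Continuous (steinSol x) := by
  have hQ := continuous_gaussQ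
  have hφ := continuous_gaussianPDFReal 0 1
  unfold steinSol
  exact Continuous.div (by fun_prop) hφ fun w => (gaussianPDFReal_pos 0 1 w one_ne_zero).ne'

lemma measurable_steinSolDeriv (x : ℝ) : Measurable (steinSolDeriv x) :=
  (measurable_id.mul (continuous_steinSol x).measurable).add
    ((measurable_one.indicator measurableSet_Ici).sub_const _)

lemma hasDerivAt_steinSol {x w : ℝ} (hw : w ≠ x) :
    HasDerivAt (steinSol x) (steinSolDeriv x w) w := by
  have hφ : φ w ≠ 0 := (gaussianPDFReal_pos 0 1 w one_ne_zero).ne'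
  have hasDerivAt_of_max {d : ℝ} (hd : HasDerivAt (fun w => gaussQ (max x w)) d w) :=
    (hd.sub ((hasDerivAt_gaussQ w).const_mul (gaussQ x))).neg.div
      (hasDerivAt_stdGaussianPDFReal w) hφ
  rcases hw.lt_or_gt with hw | hw
  · have hmax : HasDerivAt (fun w => gaussQ (max x w)) 0 w :=
      (hasDerivAt_const w (gaussQ x)).congr_of_eventuallyEq <| by
        filter_upwards [eventually_lt_nhds hw] with y hy
        rw [max_eq_left hy.le]
    refine (hasDerivAt_of_max hmax).congr_deriv ?_
    rw [steinSolDeriv, steinSol, indicator_of_notMem (notMem_Ici.2 hw)]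
    simp only [Pi.sub_apply, Pi.neg_apply]
    field_simp
    ring
  · have hmax : HasDerivAt (fun w => gaussQ (max x w)) (-φ w) w :=
      (hasDerivAt_gaussQ w).congr_of_eventuallyEq <| by
        filter_upwards [eventually_gt_nhds hw] with y hy
        rw [max_eq_right hy.le]
    refine (hasDerivAt_of_max hmax).congr_deriv ?_
    rw [steinSolDeriv, steinSol, indicator_of_mem (mem_Ici.2 hw.le)]
    simp only [Pi.sub_apply, Pi.neg_apply, Pi.one_apply]
    field_simp
    ring

lemma gaussQ_mul_gaussQ_le_gaussQ_max (x w : ℝ) : gaussQ x * gaussQ w ≤ gaussQ (max x w) := by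
  rcases le_total x w with h | h
  · rw [max_eq_right h]
    exact mul_le_of_le_one_left (gaussQ_nonneg w) (gaussQ_le_one x)
  · rw [max_eq_left h]
    exact mul_le_of_le_one_right (gaussQ_nonneg x) (gaussQ_le_one w)

lemma gaussQ_max_sub_le (x w : ℝ) : gaussQ (max x w) - gaussQ x * gaussQ w ≤ gaussQ |w| := by
  have hx := gaussQ_nonneg x
  have hw := gaussQ_nonneg w
  rcases le_total 0 w with h0 | h0
  · rw [abs_of_nonneg h0]
    linarith [antitone_gaussQ (le_max_right x w), mul_nonneg hx hw]
  · rw [abs_of_nonpos h0, gaussQ_neg]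
    rcases le_total x w with h | h
    · rw [max_eq_right h]
      nlinarith [antitone_gaussQ h, gaussQ_le_one x, gaussQ_le_one w]
    · rw [max_eq_left h]
      nlinarith [gaussQ_le_one x, gaussQ_le_one w]

lemma abs_steinSol_le (x w : ℝ) : |steinSol x w| ≤ gaussQ |w| / φ w := by
  have hφ : 0 < φ w := gaussianPDFReal_pos 0 1 w one_ne_zero
  rw [steinSol, abs_div, abs_neg, abs_of_pos hφ,
    abs_of_nonneg (sub_nonneg.2 (gaussQ_mul_gaussQ_le_gaussQ_max x w))]
  gcongr
  exact gaussQ_max_sub_le x w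

lemma abs_mul_steinSol_le_one (x w : ℝ) : |w * steinSol x w| ≤ 1 := by
  have hφ : 0 < φ w := gaussianPDFReal_pos 0 1 w one_ne_zero
  have hφ_abs : φ |w| = φ w := by simp [gaussianPDFReal_def]
  calc |w * steinSol x w| = |w| * |steinSol x w| := abs_mul _ _
    _ ≤ |w| * (gaussQ |w| / φ w) := by gcongr; exact abs_steinSol_le x w
    _ = |w| * gaussQ |w| / φ w := by ring
    _ ≤ 1 := (div_le_one hφ).2 (hφ_abs ▸ mul_gaussQ_le (abs_nonneg w))

lemma exists_abs_steinSol_le (x : ℝ) : ∃ A, ∀ w, |steinSol x w| ≤ A := by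
  obtain ⟨A, hA⟩ := isCompact_Icc.exists_bound_of_continuousOn (s := Icc (-1) 1)
    (continuous_steinSol x).continuousOn
  refine ⟨max A 1, fun w => ?_⟩
  rcases le_total |w| 1 with h | h
  · exact le_max_of_le_left (hA w (abs_le.1 h))
  · refine le_max_of_le_right ((le_mul_of_one_le_left (abs_nonneg _) h).trans ?_)
    exact abs_mul w _ ▸ abs_mul_steinSol_le_one x w

lemma abs_steinSolDeriv_le_two (x w : ℝ) : |steinSolDeriv x w| ≤ 2 := by
  have hQ : |(Ici x).indicator 1 w - gaussQ x| ≤ 1 :=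
    abs_sub_le_of_nonneg_of_le (indicator_nonneg (by simp) w)
      (indicator_le_self' (by simp) w) (gaussQ_nonneg x) (gaussQ_le_one x)
  rw [steinSolDeriv]
  linarith [abs_add_le (w * steinSol x w) ((Ici x).indicator 1 w - gaussQ x),
    abs_mul_steinSol_le_one x w]

end StdGaussian

/-! ### Stein coefficients -/

/-- The pairs `(g, g')` on which Stein identities are tested. The derivative is prescribed outside a
countable set, rather than everywhere, because `steinSol x` has a kink at `x`. -/
structure IsSteinTest (g g' : ℝ → ℝ) : Prop where
  continuous : Continuous g
  bounded : ∃ A, ∀ x, |g x| ≤ A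
  measurable_deriv : Measurable g'
  bounded_deriv : ∃ B, ∀ x, |g' x| ≤ B
  hasDerivAt : ∃ s : Set ℝ, s.Countable ∧ ∀ x ∉ s, HasDerivAt g (g' x) x

lemma isSteinTest_steinSol (x : ℝ) : IsSteinTest (steinSol x) (steinSolDeriv x) where
  continuous := continuous_steinSol x
  bounded := exists_abs_steinSol_le x
  measurable_deriv := measurable_steinSolDeriv x
  bounded_deriv := ⟨2, abs_steinSolDeriv_le_two x⟩
  hasDerivAt := ⟨{x}, countable_singleton x, fun _ hw => hasDerivAt_steinSol hw⟩

namespace IsSteinTest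

variable {g g' : ℝ → ℝ} {Ω : Type*} {mΩ : MeasurableSpace Ω} {P : Measure Ω} {W Y : Ω → ℝ}

lemma comp_affine (h : IsSteinTest g g') {c : ℝ} (hc : c ≠ 0) (b : ℝ) :
    IsSteinTest (fun x => g (c * x + b)) (fun x => c * g' (c * x + b)) where
  continuous := h.continuous.comp (by fun_prop)
  bounded := h.bounded.imp fun _ hA x => hA _
  measurable_deriv := (h.measurable_deriv.comp (by fun_prop)).const_mul c
  bounded_deriv := by
    obtain ⟨B, hB⟩ := h.bounded_deriv
    refine ⟨|c| * B, fun x => ?_⟩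
    rw [abs_mul]
    gcongr
    exact hB _
  hasDerivAt := by
    obtain ⟨s, hs, hd⟩ := h.hasDerivAt
    refine ⟨(fun x => c * x + b) ⁻¹' s,
      hs.preimage ((add_left_injective b).comp (mul_right_injective₀ hc)), fun x hx => ?_⟩
    have haff : HasDerivAt (fun x => c * x + b) c x := by
      simpa using ((hasDerivAt_id x).const_mul c).add_const b
    exact ((hd _ hx).comp x haff).congr_deriv (mul_comm _ _)

lemma const_mul (h : IsSteinTest g g') (c : ℝ) :
    IsSteinTest (fun x => c * g x) (fun x => c * g' x) where
  continuous := h.continuous.const_mul c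
  bounded := by
    obtain ⟨A, hA⟩ := h.bounded
    refine ⟨|c| * A, fun x => ?_⟩
    rw [abs_mul]
    gcongr
    exact hA _
  measurable_deriv := h.measurable_deriv.const_mul c
  bounded_deriv := by
    obtain ⟨B, hB⟩ := h.bounded_deriv
    refine ⟨|c| * B, fun x => ?_⟩
    rw [abs_mul]
    gcongr
    exact hB _
  hasDerivAt := by
    obtain ⟨s, hs, hd⟩ := h.hasDerivAt
    exact ⟨s, hs, fun x hx => (hd x hx).const_mul c⟩

lemma measurable (h : IsSteinTest g g') : Measurable g := h.continuous.measurable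

lemma integrable_mul_comp (h : IsSteinTest g g') (hY : Integrable Y P) (hW : AEMeasurable W P) :
    Integrable (fun ω => Y ω * g (W ω)) P := by
  obtain ⟨A, hA⟩ := h.bounded
  exact hY.mul_bdd (h.measurable.comp_aemeasurable hW).aestronglyMeasurable
    (ae_of_all _ fun ω => hA _)

lemma integrable_mul_deriv_comp (h : IsSteinTest g g') (hY : Integrable Y P)
    (hW : AEMeasurable W P) : Integrable (fun ω => Y ω * g' (W ω)) P := by
  obtain ⟨B, hB⟩ := h.bounded_deriv
  exact hY.mul_bdd (h.measurable_deriv.comp_aemeasurable hW).aestronglyMeasurable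
    (ae_of_all _ fun ω => hB _)

lemma integrable (h : IsSteinTest g g') {μ : Measure ℝ} [IsFiniteMeasure μ] : Integrable g μ := by
  simpa using h.integrable_mul_comp (integrable_const (1 : ℝ)) (aemeasurable_id (μ := μ))

lemma integrable_deriv (h : IsSteinTest g g') {μ : Measure ℝ} [IsFiniteMeasure μ] :
    Integrable g' μ := by
  simpa using h.integrable_mul_deriv_comp (integrable_const (1 : ℝ)) (aemeasurable_id (μ := μ))

end IsSteinTest

/-- `T` is a *Stein coefficient* of `W` (Chatterjee): `E[W g(W)] = E[T g'(W)]` for all test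
functions `g`. A standard Gaussian `W` has the coefficient `T = 1`. -/
structure IsSteinCoeff {Ω : Type*} {mΩ : MeasurableSpace Ω} (T W : Ω → ℝ) (P : Measure Ω) :
    Prop where
  integrable_coeff : Integrable T P
  integrable : Integrable W P
  integral_mul_eq {g g' : ℝ → ℝ} :
    IsSteinTest g g' → ∫ ω, W ω * g (W ω) ∂P = ∫ ω, T ω * g' (W ω) ∂P

lemma integral_eq_integral_integral_of_indepFun {Ω 𝓧 𝓨 E : Type*} {mΩ : MeasurableSpace Ω}
    [MeasurableSpace 𝓧] [MeasurableSpace 𝓨] [NormedAddCommGroup E] [NormedSpace ℝ E]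
    {P : Measure Ω} [IsFiniteMeasure P] {X : Ω → 𝓧} {Y : Ω → 𝓨} (hXY : IndepFun X Y P)
    (hX : AEMeasurable X P) (hY : AEMeasurable Y P) {f : 𝓧 × 𝓨 → E}
    (hfm : StronglyMeasurable f) (hf : Integrable (fun ω => f (X ω, Y ω)) P) :
    ∫ ω, f (X ω, Y ω) ∂P = ∫ ω', ∫ ω, f (X ω, Y ω') ∂P ∂P := by
  have hmap := (indepFun_iff_map_prod_eq_prod_map_map hX hY).1 hXY
  have hf' : Integrable f ((P.map X).prod (P.map Y)) := by
    rw [← hmap]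
    exact (integrable_map_measure hfm.aestronglyMeasurable (hX.prodMk hY)).2 hf
  calc ∫ ω, f (X ω, Y ω) ∂P = ∫ p, f p ∂(P.map X).prod (P.map Y) := by
        rw [← hmap, integral_map (hX.prodMk hY) hfm.aestronglyMeasurable]
    _ = ∫ y, ∫ x, f (x, y) ∂P.map X ∂P.map Y := integral_prod_symm f hf'
    _ = ∫ ω', ∫ x, f (x, Y ω') ∂P.map X ∂P :=
        integral_map hY hfm.integral_prod_left'.aestronglyMeasurable
    _ = ∫ ω', ∫ ω, f (X ω, Y ω') ∂P ∂P := by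
        congr with ω'
        exact integral_map hX (hfm.comp_measurable measurable_prodMk_right).aestronglyMeasurable

lemma integral_abs_sub_integral_le_sqrt_variance {Ω : Type*} {mΩ : MeasurableSpace Ω}
    {P : Measure Ω} [IsProbabilityMeasure P] {X : Ω → ℝ} (hX : MemLp X 2 P) :
    ∫ ω, |X ω - P[X]| ∂P ≤ √Var[X; P] := by
  have hdev : MemLp (fun ω => |X ω - P[X]|) 2 P := (hX.sub (memLp_const _)).abs
  refine Real.le_sqrt_of_sq_le ?_
  have := variance_nonneg (fun ω => |X ω - P[X]|) P
  rw [variance_eq_sub hdev, sub_nonneg] at this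
  simpa only [variance_eq_integral hX.aestronglyMeasurable.aemeasurable, Pi.pow_apply, sq_abs]
    using this

namespace IsSteinCoeff

variable {Ω : Type*} {mΩ : MeasurableSpace Ω} {P : Measure Ω} {T U W Y : Ω → ℝ}

lemma const_mul (h : IsSteinCoeff T W P) {c : ℝ} (hc : c ≠ 0) :
    IsSteinCoeff (fun ω => c ^ 2 * T ω) (fun ω => c * W ω) P where
  integrable_coeff := h.integrable_coeff.const_mul _
  integrable := h.integrable.const_mul c
  integral_mul_eq {g g'} hg := by
    have := h.integral_mul_eq ((hg.comp_affine hc 0).const_mul c)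
    simp only [add_zero] at this
    convert! this using 3 <;> ring

lemma integral_mul_comp_add_eq [IsFiniteMeasure P] (h : IsSteinCoeff T W P)
    (hind : IndepFun (fun ω => (T ω, W ω)) Y P) (hY : AEMeasurable Y P)
    {g g' : ℝ → ℝ} (hg : IsSteinTest g g') :
    ∫ ω, W ω * g (W ω + Y ω) ∂P = ∫ ω, T ω * g' (W ω + Y ω) ∂P := by
  have hW := h.integrable.aemeasurable
  have hTW := h.integrable_coeff.aemeasurable.prodMk hW
  have hg_meas := hg.measurable
  have hg'_meas := hg.measurable_deriv
  calc ∫ ω, W ω * g (W ω + Y ω) ∂P = ∫ ω', ∫ ω, W ω * g (W ω + Y ω') ∂P ∂P :=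
        integral_eq_integral_integral_of_indepFun hind hTW hY
          (f := fun p => p.1.2 * g (p.1.2 + p.2))
          (Measurable.stronglyMeasurable (by fun_prop))
          (hg.integrable_mul_comp h.integrable (hW.add hY))
    _ = ∫ ω', ∫ ω, T ω * g' (W ω + Y ω') ∂P ∂P := by
        congr with ω'
        simpa only [one_mul] using h.integral_mul_eq (hg.comp_affine one_ne_zero (Y ω'))
    _ = ∫ ω, T ω * g' (W ω + Y ω) ∂P :=
        (integral_eq_integral_integral_of_indepFun hind hTW hY
          (f := fun p => p.1.1 * g' (p.1.2 + p.2))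
          (Measurable.stronglyMeasurable (by fun_prop))
          (hg.integrable_mul_deriv_comp h.integrable_coeff (hW.add hY))).symm

lemma add [IsFiniteMeasure P] (hW : IsSteinCoeff T W P) (hY : IsSteinCoeff U Y P)
    (hind : IndepFun (fun ω => (T ω, W ω)) (fun ω => (U ω, Y ω)) P) :
    IsSteinCoeff (fun ω => T ω + U ω) (fun ω => W ω + Y ω) P where
  integrable_coeff := hW.integrable_coeff.add hY.integrable_coeff
  integrable := hW.integrable.add hY.integrable
  integral_mul_eq {g g'} hg := by
    have hsum : AEMeasurable (fun ω => W ω + Y ω) P :=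
      hW.integrable.aemeasurable.add hY.integrable.aemeasurable
    have hWg := hW.integral_mul_comp_add_eq (hind.comp measurable_id measurable_snd)
      hY.integrable.aemeasurable hg
    have hYg := hY.integral_mul_comp_add_eq (hind.symm.comp measurable_id measurable_snd)
      hW.integrable.aemeasurable hg
    simp only [Function.comp_apply, add_comm (Y _)] at hWg hYg
    simp only [add_mul]
    rw [integral_add (hg.integrable_mul_comp hW.integrable hsum)
        (hg.integrable_mul_comp hY.integrable hsum),
      integral_add (hg.integrable_mul_deriv_comp hW.integrable_coeff hsum)
        (hg.integrable_mul_deriv_comp hY.integrable_coeff hsum), hWg, hYg]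

lemma sub [IsFiniteMeasure P] (hW : IsSteinCoeff T W P) (hY : IsSteinCoeff U Y P)
    (hind : IndepFun (fun ω => (T ω, W ω)) (fun ω => (U ω, Y ω)) P) :
    IsSteinCoeff (fun ω => T ω + U ω) (fun ω => W ω - Y ω) P := by
  have hneg : IsSteinCoeff U (fun ω => -Y ω) P := by
    simpa using hY.const_mul (c := -1) (by norm_num)
  simpa only [sub_eq_add_neg] using
    hW.add hneg (hind.comp measurable_id (measurable_fst.prodMk measurable_snd.neg))

lemma comp_hasLaw {𝓧 : Type*} {m𝓧 : MeasurableSpace 𝓧} {μ : Measure 𝓧} {t w : 𝓧 → ℝ} {S : Ω → 𝓧}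
    (h : IsSteinCoeff t w μ) (hS : HasLaw S μ P) :
    IsSteinCoeff (fun ω => t (S ω)) (fun ω => w (S ω)) P where
  integrable_coeff := (hS.map_eq.symm ▸ h.integrable_coeff).comp_aemeasurable hS.aemeasurable
  integrable := (hS.map_eq.symm ▸ h.integrable).comp_aemeasurable hS.aemeasurable
  integral_mul_eq {g g'} hg := by
    have hw := h.integrable.aemeasurable
    exact (hS.integral_comp
        (hg.integrable_mul_comp h.integrable hw).aestronglyMeasurable).trans <|
      (h.integral_mul_eq hg).trans (hS.integral_comp
        (hg.integrable_mul_deriv_comp h.integrable_coeff hw).aestronglyMeasurable).symm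

theorem abs_measureReal_sub_gaussQ_le [IsProbabilityMeasure P] (h : IsSteinCoeff T W P) (x : ℝ) :
    |P.real {ω | x ≤ W ω} - gaussQ x| ≤ 2 * ∫ ω, |1 - T ω| ∂P := by
  have hW := h.integrable.aemeasurable
  have hf := isSteinTest_steinSol x
  have hfW : Integrable (fun ω => W ω * steinSol x (W ω)) P :=
    hf.integrable_mul_comp h.integrable hW
  have hf'W : Integrable (fun ω => steinSolDeriv x (W ω)) P := by
    simpa using hf.integrable_mul_deriv_comp (integrable_const (1 : ℝ)) hW
  have hTf'W := hf.integrable_mul_deriv_comp h.integrable_coeff hW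
  have hset : NullMeasurableSet {ω | x ≤ W ω} P := nullMeasurableSet_le aemeasurable_const hW
  have hstein : P.real {ω | x ≤ W ω} - gaussQ x = ∫ ω, (1 - T ω) * steinSolDeriv x (W ω) ∂P := by
    calc P.real {ω | x ≤ W ω} - gaussQ x
        = ∫ ω, ({ω | x ≤ W ω}.indicator 1 ω - gaussQ x) ∂P := by
          have hind : Integrable ({ω | x ≤ W ω}.indicator (1 : Ω → ℝ)) P :=
            (integrable_const (1 : ℝ)).indicator₀ hset
          rw [integral_sub hind (integrable_const _), integral_indicator₀ hset]
          simp
      _ = ∫ ω, (steinSolDeriv x (W ω) - W ω * steinSol x (W ω)) ∂P := by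
          congr with ω
          rw [steinSolDeriv, add_sub_cancel_left]
          rfl
      _ = ∫ ω, (1 - T ω) * steinSolDeriv x (W ω) ∂P := by
          rw [integral_sub hf'W hfW, h.integral_mul_eq hf, ← integral_sub hf'W hTf'W]
          simp only [sub_mul, one_mul]
  rw [hstein, ← integral_const_mul]
  have hdiff : Integrable (fun ω => 1 - T ω) P := (integrable_const 1).sub h.integrable_coeff
  refine abs_integral_le_integral_abs.trans (integral_mono_of_nonneg
    (ae_of_all _ fun _ => abs_nonneg _) (hdiff.abs.const_mul 2) (ae_of_all _ fun ω => ?_))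
  simp only [abs_mul, mul_comm (2 : ℝ)]
  gcongr
  exact abs_steinSolDeriv_le_two x _

theorem abs_measureReal_sub_gaussQ_le_sqrt_variance [IsProbabilityMeasure P]
    (h : IsSteinCoeff T W P) (hT : MemLp T 2 P) {v : ℝ} (hv : 0 < v) (hTv : P[T] = v) (x : ℝ) :
    |P.real {ω | x ≤ W ω} - gaussQ (x / √v)| ≤ 2 * √Var[T; P] / v := by
  have hσ : 0 < √v := Real.sqrt_pos.2 hv
  have hσ_sq : (√v)⁻¹ ^ 2 = v⁻¹ := by rw [inv_pow, Real.sq_sqrt hv.le]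
  have hset : {ω | x ≤ W ω} = {ω | x / √v ≤ (√v)⁻¹ * W ω} := by
    simp only [inv_mul_eq_div, div_le_div_iff_of_pos_right hσ]
  have habs (ω : Ω) : |1 - (√v)⁻¹ ^ 2 * T ω| = v⁻¹ * |T ω - P[T]| := by
    rw [hTv, hσ_sq, abs_sub_comm, ← abs_of_pos (inv_pos.2 hv), ← abs_mul, abs_of_pos (inv_pos.2 hv),
      mul_sub, inv_mul_cancel₀ hv.ne']
  rw [hset]
  refine ((h.const_mul (inv_pos.2 hσ).ne').abs_measureReal_sub_gaussQ_le (x / √v)).trans ?_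
  simp only [habs]
  rw [integral_const_mul, div_eq_inv_mul, mul_left_comm]
  gcongr
  exact integral_abs_sub_integral_le_sqrt_variance hT

end IsSteinCoeff

/-! ### The Gamma distribution -/

lemma integral_eq_sub_of_hasDerivAt_off_countable_of_tendsto {E : Type*} [NormedAddCommGroup E]
    [NormedSpace ℝ E] [CompleteSpace E] {F F' : ℝ → E} {s : Set ℝ} {m n : E} (hs : s.Countable)
    (hcont : Continuous F) (hderiv : ∀ x ∉ s, HasDerivAt F (F' x) x) (hint : Integrable F')
    (hbot : Tendsto F atBot (𝓝 m)) (htop : Tendsto F atTop (𝓝 n)) :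
    ∫ x, F' x = n - m := by
  have hlim : Tendsto (fun i => ∫ x in -i..i, F' x) atTop (𝓝 (∫ x, F' x)) :=
    intervalIntegral_tendsto_integral hint tendsto_neg_atTop_atBot tendsto_id
  refine tendsto_nhds_unique hlim ((htop.sub (hbot.comp tendsto_neg_atTop_atBot)).congr' ?_)
  filter_upwards [eventually_ge_atTop 0] with i hi
  exact (integral_eq_of_hasDerivAt_off_countable_of_le F F' (neg_le_self hi) hs hcont.continuousOn
    (fun x hx => hderiv x hx.2) hint.intervalIntegrable).symm

section Gamma

variable {a r : ℝ}

lemma integrable_gammaMeasure_iff (ha : 0 < a) (hr : 0 < r) {h : ℝ → ℝ} :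
    Integrable h (gammaMeasure a r) ↔ Integrable fun s => gammaPDFReal a r s * h s := by
  rw [gammaMeasure, integrable_withDensity_iff_integrable_smul'
    (f := gammaPDF a r) (measurable_gammaPDFReal a r).ennreal_ofReal
    (ae_of_all _ fun _ => ENNReal.ofReal_lt_top)]
  simp only [gammaPDF, smul_eq_mul, ENNReal.toReal_ofReal (gammaPDFReal_nonneg ha hr _)]

lemma integral_gammaMeasure (ha : 0 < a) (hr : 0 < r) (h : ℝ → ℝ) :
    ∫ s, h s ∂gammaMeasure a r = ∫ s, gammaPDFReal a r s * h s := by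
  rw [gammaMeasure, integral_withDensity_eq_integral_toReal_smul
    (f := gammaPDF a r) (measurable_gammaPDFReal a r).ennreal_ofReal
    (ae_of_all _ fun _ => ENNReal.ofReal_lt_top)]
  simp only [gammaPDF, smul_eq_mul, ENNReal.toReal_ofReal (gammaPDFReal_nonneg ha hr _)]

lemma gammaPDFReal_mul_self (ha : 0 < a) (hr : 0 < r) (s : ℝ) :
    gammaPDFReal a r s * s = a / r * gammaPDFReal (a + 1) r s := by
  unfold gammaPDFReal
  split_ifs with hs
  · have hpow : s ^ (a + 1 - 1) = s ^ (a - 1) * s := by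
      rw [← Real.rpow_add_one' hs (by linarith)]
      ring_nf
    have hΓ := (Real.Gamma_pos_of_pos ha).ne'
    rw [hpow, Real.Gamma_add_one ha.ne', Real.rpow_add_one hr.ne']
    field_simp
  · simp

lemma integrable_mul_gammaMeasure_iff (ha : 0 < a) (hr : 0 < r) {h : ℝ → ℝ} :
    Integrable (fun s => s * h s) (gammaMeasure a r) ↔ Integrable h (gammaMeasure (a + 1) r) := by
  rw [integrable_gammaMeasure_iff ha hr, integrable_gammaMeasure_iff (by positivity) hr]
  simp only [← mul_assoc, gammaPDFReal_mul_self ha hr]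
  simp only [mul_assoc]
  exact integrable_const_mul_iff (by simp [ha.ne', hr.ne']) _

lemma integral_mul_gammaMeasure (ha : 0 < a) (hr : 0 < r) (h : ℝ → ℝ) :
    ∫ s, s * h s ∂gammaMeasure a r = a / r * ∫ s, h s ∂gammaMeasure (a + 1) r := by
  rw [integral_gammaMeasure ha hr, integral_gammaMeasure (by positivity) hr, ← integral_const_mul]
  simp only [← mul_assoc, gammaPDFReal_mul_self ha hr]

lemma integrable_id_gammaMeasure (ha : 0 < a) (hr : 0 < r) :
    Integrable id (gammaMeasure a r) := by
  have := isProbabilityMeasure_gammaMeasure (a := a + 1) (by positivity) hr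
  simpa [Function.id_def] using
    (integrable_mul_gammaMeasure_iff ha hr).2 (integrable_const (1 : ℝ))

lemma memLp_two_id_gammaMeasure (ha : 0 < a) (hr : 0 < r) :
    MemLp id 2 (gammaMeasure a r) := by
  rw [memLp_two_iff_integrable_sq aestronglyMeasurable_id]
  simpa only [id_eq, sq] using (integrable_mul_gammaMeasure_iff ha hr).2
    (integrable_id_gammaMeasure (by positivity) hr)

lemma integral_id_gammaMeasure (ha : 0 < a) (hr : 0 < r) :
    ∫ s, s ∂gammaMeasure a r = a / r := by
  have := isProbabilityMeasure_gammaMeasure (a := a + 1) (by positivity) hr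
  simpa using integral_mul_gammaMeasure ha hr 1

lemma variance_id_gammaMeasure (ha : 0 < a) (hr : 0 < r) :
    Var[id; gammaMeasure a r] = a / r ^ 2 := by
  have := isProbabilityMeasure_gammaMeasure ha hr
  rw [variance_eq_sub (memLp_two_id_gammaMeasure ha hr)]
  simp only [Pi.pow_apply, id_eq, sq]
  rw [integral_id_gammaMeasure ha hr, integral_mul_gammaMeasure ha hr,
    integral_id_gammaMeasure (by positivity) hr]
  field_simp
  ring

lemma gammaPDFReal_of_neg {s : ℝ} (hs : s < 0) : gammaPDFReal a r s = 0 := if_neg hs.not_ge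

lemma gammaPDFReal_of_nonneg {s : ℝ} (hs : 0 ≤ s) :
    gammaPDFReal a r s = r ^ a / Real.Gamma a * s ^ (a - 1) * Real.exp (-(r * s)) := if_pos hs

lemma continuous_gammaPDFReal (ha : 1 < a) : Continuous (gammaPDFReal a r) := by
  unfold gammaPDFReal
  refine continuous_if_le continuous_const continuous_id (Continuous.continuousOn ?_)
    continuousOn_const fun s hs => ?_
  · have := Real.continuous_rpow_const (q := a - 1) (by linarith)
    fun_prop
  · simp [← hs, Real.zero_rpow (sub_pos.2 ha).ne']

lemma hasDerivAt_gammaPDFReal_add_one (ha : 0 < a) (hr : 0 < r) {s : ℝ} (hs : s ≠ 0) :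
    HasDerivAt (gammaPDFReal (a + 1) r)
      (r * (gammaPDFReal a r s - gammaPDFReal (a + 1) r s)) s := by
  rcases hs.lt_or_gt with hs | hs
  · rw [gammaPDFReal_of_neg hs, gammaPDFReal_of_neg hs, sub_self, mul_zero]
    refine (hasDerivAt_const s (0 : ℝ)).congr_of_eventuallyEq ?_
    filter_upwards [eventually_lt_nhds hs] with t ht using gammaPDFReal_of_neg ht
  · have hexp : HasDerivAt (fun t => Real.exp (-(r * t))) (Real.exp (-(r * s)) * -r) s := by
      simpa using ((hasDerivAt_id s).const_mul r).neg.exp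
    have hpow := Real.hasDerivAt_rpow_const (p := a + 1 - 1) (Or.inl hs.ne')
    have hEq : gammaPDFReal (a + 1) r =ᶠ[𝓝 s] fun t =>
        r ^ (a + 1) / Real.Gamma (a + 1) * t ^ (a + 1 - 1) * Real.exp (-(r * t)) := by
      filter_upwards [eventually_gt_nhds hs] with t ht using gammaPDFReal_of_nonneg ht.le
    refine (((hpow.const_mul _).mul hexp).congr_of_eventuallyEq hEq).congr_deriv ?_
    rw [gammaPDFReal_of_nonneg hs.le, gammaPDFReal_of_nonneg hs.le, Real.Gamma_add_one ha.ne',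
      Real.rpow_add_one hr.ne']
    have hΓ := (Real.Gamma_pos_of_pos ha).ne'
    field_simp
    ring_nf

lemma tendsto_gammaPDFReal_atBot : Tendsto (gammaPDFReal a r) atBot (𝓝 0) := by
  refine tendsto_const_nhds.congr' ?_
  filter_upwards [eventually_lt_atBot 0] with s hs using (gammaPDFReal_of_neg hs).symm

lemma tendsto_gammaPDFReal_atTop (hr : 0 < r) : Tendsto (gammaPDFReal a r) atTop (𝓝 0) := by
  have hlim := (tendsto_rpow_mul_exp_neg_mul_atTop_nhds_zero (a - 1) r hr).const_mul
    (r ^ a / Real.Gamma a)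
  rw [mul_zero] at hlim
  refine hlim.congr' ?_
  filter_upwards [eventually_ge_atTop 0] with s hs
  rw [gammaPDFReal_of_nonneg hs, neg_mul, mul_assoc]

/-- Integrating by parts at shape `a + 1` rather than `a` avoids a boundary term at `0` even when
`a ≤ 1`, where the density of shape `a` does not vanish at the origin. -/
lemma integral_gammaMeasure_add_one (ha : 0 < a) (hr : 0 < r) {g g' : ℝ → ℝ}
    (hg : IsSteinTest g g') :
    ∫ s, g s ∂gammaMeasure (a + 1) r =
      ∫ s, g s ∂gammaMeasure a r + 1 / r * ∫ s, g' s ∂gammaMeasure (a + 1) r := by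
  have ha1 : 0 < a + 1 := by positivity
  have := isProbabilityMeasure_gammaMeasure ha hr
  have := isProbabilityMeasure_gammaMeasure ha1 hr
  have hpg := (integrable_gammaMeasure_iff ha hr).1 hg.integrable
  have hp1g := (integrable_gammaMeasure_iff ha1 hr).1 hg.integrable
  have hp1g' := (integrable_gammaMeasure_iff ha1 hr).1 hg.integrable_deriv
  have hdiff : Integrable fun x =>
      r * (gammaPDFReal a r x * g x - gammaPDFReal (a + 1) r x * g x) :=
    (hpg.sub hp1g).const_mul r
  obtain ⟨s, hs, hd⟩ := hg.hasDerivAt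
  obtain ⟨A, hA⟩ := hg.bounded
  have tendsto_mul {l : Filter ℝ} (hl : Tendsto (gammaPDFReal (a + 1) r) l (𝓝 0)) :
      Tendsto (fun x => gammaPDFReal (a + 1) r x * g x) l (𝓝 0) :=
    hl.zero_mul_isBoundedUnder_le (isBoundedUnder_of ⟨A, hA⟩)
  have hderiv (x : ℝ) (hx : x ∉ insert 0 s) :
      HasDerivAt (fun x => gammaPDFReal (a + 1) r x * g x)
        (r * (gammaPDFReal a r x * g x - gammaPDFReal (a + 1) r x * g x) +
          gammaPDFReal (a + 1) r x * g' x) x := by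
    rw [mem_insert_iff, not_or] at hx
    exact ((hasDerivAt_gammaPDFReal_add_one ha hr hx.1).mul (hd x hx.2)).congr_deriv (by ring)
  have hparts := integral_eq_sub_of_hasDerivAt_off_countable_of_tendsto (hs.insert 0)
    ((continuous_gammaPDFReal (by linarith)).mul hg.continuous) hderiv
    (hdiff.add hp1g') (tendsto_mul tendsto_gammaPDFReal_atBot)
    (tendsto_mul (tendsto_gammaPDFReal_atTop hr))
  rw [integral_add hdiff hp1g', integral_const_mul, integral_sub hpg hp1g,
    ← integral_gammaMeasure ha hr, ← integral_gammaMeasure ha1 hr, ← integral_gammaMeasure ha1 hr]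
    at hparts
  field_simp
  linarith

lemma isSteinCoeff_gammaMeasure (ha : 0 < a) (hr : 0 < r) :
    IsSteinCoeff (fun s => s / r) (fun s => s - a / r) (gammaMeasure a r) := by
  have := isProbabilityMeasure_gammaMeasure ha hr
  have hid : Integrable (fun s => s) (gammaMeasure a r) := integrable_id_gammaMeasure ha hr
  refine ⟨hid.div_const r, hid.sub (integrable_const _), fun {g g'} hg => ?_⟩
  have hshift : IsSteinTest (fun s => g (s - a / r)) (fun s => g' (s - a / r)) := by
    simpa [sub_eq_add_neg] using hg.comp_affine one_ne_zero (-(a / r))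
  have hmul : Integrable (fun s => s * g (s - a / r)) (gammaMeasure a r) :=
    hshift.integrable_mul_comp hid aemeasurable_id
  calc ∫ s, (s - a / r) * g (s - a / r) ∂gammaMeasure a r
      = ∫ s, s * g (s - a / r) ∂gammaMeasure a r
          - a / r * ∫ s, g (s - a / r) ∂gammaMeasure a r := by
        simp only [sub_mul]
        rw [integral_sub hmul (hshift.integrable.const_mul _), integral_const_mul]
    _ = 1 / r * (a / r * ∫ s, g' (s - a / r) ∂gammaMeasure (a + 1) r) := by
        rw [integral_mul_gammaMeasure ha hr, integral_gammaMeasure_add_one ha hr hshift]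
        ring
    _ = ∫ s, s / r * g' (s - a / r) ∂gammaMeasure a r := by
        rw [← integral_mul_gammaMeasure ha hr, ← integral_const_mul]
        congr with s
        ring

end Gamma

/-! ### Differences of independent Gamma variables -/

/-- The Gamma distribution of shape `a` and scale `θ`, i.e. of rate `1 / θ`, with the degenerate
shape `a = 0` read as the point mass at `0`. -/
noncomputable def gammaLaw (a θ : ℝ) : Measure ℝ :=
  if a = 0 then Measure.dirac 0 else gammaMeasure a (1 / θ)

section GammaLaw

variable {a θ : ℝ}

lemma gammaLaw_zero (θ : ℝ) : gammaLaw 0 θ = Measure.dirac 0 := if_pos rfl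

lemma gammaLaw_of_ne_zero (ha : a ≠ 0) : gammaLaw a θ = gammaMeasure a (1 / θ) := if_neg ha

lemma isProbabilityMeasure_gammaLaw (ha : 0 ≤ a) (hθ : 0 < θ) :
    IsProbabilityMeasure (gammaLaw a θ) := by
  rcases ha.eq_or_lt with rfl | ha
  · rw [gammaLaw_zero]
    infer_instance
  · rw [gammaLaw_of_ne_zero ha.ne']
    exact isProbabilityMeasure_gammaMeasure ha (one_div_pos.2 hθ)

lemma isSteinCoeff_gammaLaw (ha : 0 ≤ a) (hθ : 0 < θ) :
    IsSteinCoeff (fun s => θ * s) (fun s => s - θ * a) (gammaLaw a θ) := by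
  rcases ha.eq_or_lt with rfl | ha
  · rw [gammaLaw_zero]
    exact ⟨integrable_dirac (by simp), integrable_dirac (by simp), by simp⟩
  · rw [gammaLaw_of_ne_zero ha.ne']
    simpa [mul_comm] using isSteinCoeff_gammaMeasure ha (one_div_pos.2 hθ)

lemma memLp_two_id_gammaLaw (ha : 0 ≤ a) (hθ : 0 < θ) : MemLp id 2 (gammaLaw a θ) := by
  rcases ha.eq_or_lt with rfl | ha
  · rw [gammaLaw_zero]
    exact (memLp_const (0 : ℝ)).ae_eq (ae_eq_dirac id).symm
  · rw [gammaLaw_of_ne_zero ha.ne']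
    exact memLp_two_id_gammaMeasure ha (one_div_pos.2 hθ)

lemma integral_id_gammaLaw (ha : 0 ≤ a) (hθ : 0 < θ) : ∫ s, s ∂gammaLaw a θ = θ * a := by
  rcases ha.eq_or_lt with rfl | ha
  · simp [gammaLaw_zero]
  · rw [gammaLaw_of_ne_zero ha.ne', integral_id_gammaMeasure ha (one_div_pos.2 hθ)]
    simp [mul_comm]

lemma variance_id_gammaLaw (ha : 0 ≤ a) (hθ : 0 < θ) : Var[id; gammaLaw a θ] = θ ^ 2 * a := by
  rcases ha.eq_or_lt with rfl | ha
  · simp [gammaLaw_zero]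
  · rw [gammaLaw_of_ne_zero ha.ne', variance_id_gammaMeasure ha (one_div_pos.2 hθ)]
    simp [mul_comm]

end GammaLaw

section Difference

variable {Ω : Type*} {mΩ : MeasurableSpace Ω} {P : Measure Ω} {S X : Ω → ℝ} {a b θ η : ℝ}

lemma memLp_two_of_hasLaw_gammaLaw (ha : 0 ≤ a) (hθ : 0 < θ) (hS : HasLaw S (gammaLaw a θ) P) :
    MemLp S 2 P :=
  (hS.map_eq.symm ▸ memLp_two_id_gammaLaw ha hθ).comp_of_map hS.aemeasurable

lemma isSteinCoeff_sub_of_gammaLaw (ha : 0 ≤ a) (hb : 0 ≤ b) (hθ : 0 < θ) (hη : 0 < η)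
    (hS : HasLaw S (gammaLaw a θ) P) (hX : HasLaw X (gammaLaw b η) P) (hSX : IndepFun S X P) :
    IsSteinCoeff (fun ω => θ * S ω + η * X ω) (fun ω => (S ω - θ * a) - (X ω - η * b)) P := by
  have := isProbabilityMeasure_gammaLaw ha hθ
  have := hS.isProbabilityMeasure
  exact ((isSteinCoeff_gammaLaw ha hθ).comp_hasLaw hS).sub
    ((isSteinCoeff_gammaLaw hb hη).comp_hasLaw hX)
    (hSX.comp (φ := fun s => (θ * s, s - θ * a)) (ψ := fun x => (η * x, x - η * b))
      (by fun_prop) (by fun_prop))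

lemma variance_add_of_gammaLaw (ha : 0 ≤ a) (hb : 0 ≤ b) (hθ : 0 < θ) (hη : 0 < η)
    (hS : HasLaw S (gammaLaw a θ) P) (hX : HasLaw X (gammaLaw b η) P) (hSX : IndepFun S X P) :
    Var[fun ω => θ * S ω + η * X ω; P] = θ ^ 2 * (θ ^ 2 * a) + η ^ 2 * (η ^ 2 * b) := by
  have := isProbabilityMeasure_gammaLaw ha hθ
  have := hS.isProbabilityMeasure
  have hind : IndepFun (fun ω => θ * S ω) (fun ω => η * X ω) P :=
    hSX.comp (measurable_const_mul θ) (measurable_const_mul η)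
  rw [hind.variance_fun_add ((memLp_two_of_hasLaw_gammaLaw ha hθ hS).const_mul θ)
      ((memLp_two_of_hasLaw_gammaLaw hb hη hX).const_mul η), variance_const_mul,
    variance_const_mul, hS.variance_eq, hX.variance_eq, variance_id_gammaLaw ha hθ,
    variance_id_gammaLaw hb hη]

lemma integral_add_of_gammaLaw (ha : 0 ≤ a) (hb : 0 ≤ b) (hθ : 0 < θ) (hη : 0 < η)
    (hS : HasLaw S (gammaLaw a θ) P) (hX : HasLaw X (gammaLaw b η) P) :
    ∫ ω, (θ * S ω + η * X ω) ∂P = θ ^ 2 * a + η ^ 2 * b := by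
  have := isProbabilityMeasure_gammaLaw ha hθ
  have := hS.isProbabilityMeasure
  have hSint := (memLp_two_of_hasLaw_gammaLaw ha hθ hS).integrable one_le_two
  have hXint := (memLp_two_of_hasLaw_gammaLaw hb hη hX).integrable one_le_two
  rw [integral_add (hSint.const_mul θ) (hXint.const_mul η), integral_const_mul,
    integral_const_mul, hS.integral_eq, hX.integral_eq, integral_id_gammaLaw ha hθ,
    integral_id_gammaLaw hb hη]
  ring

theorem abs_measureReal_sub_gaussQ_le_of_gammaLaw (ha : 0 ≤ a) (hb : 0 ≤ b) (hθ : 0 < θ)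
    (hη : 0 < η) (hv : 0 < θ ^ 2 * a + η ^ 2 * b) (hS : HasLaw S (gammaLaw a θ) P)
    (hX : HasLaw X (gammaLaw b η) P) (hSX : IndepFun S X P) (β : ℝ) :
    |P.real {ω | β ≤ S ω - X ω} - gaussQ ((β - θ * a + η * b) / √(θ ^ 2 * a + η ^ 2 * b))| ≤
      2 * max θ η / √(θ ^ 2 * a + η ^ 2 * b) := by
  have := isProbabilityMeasure_gammaLaw ha hθ
  have := hS.isProbabilityMeasure
  have hvar : Var[fun ω => θ * S ω + η * X ω; P] ≤ max θ η ^ 2 * (θ ^ 2 * a + η ^ 2 * b) := by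
    rw [variance_add_of_gammaLaw ha hb hθ hη hS hX hSX, mul_add]
    gcongr
    exacts [le_max_left _ _, le_max_right _ _]
  have hstein := (isSteinCoeff_sub_of_gammaLaw ha hb hθ hη hS hX hSX)
    |>.abs_measureReal_sub_gaussQ_le_sqrt_variance
      (((memLp_two_of_hasLaw_gammaLaw ha hθ hS).const_mul θ).add
        ((memLp_two_of_hasLaw_gammaLaw hb hη hX).const_mul η))
      hv (integral_add_of_gammaLaw ha hb hθ hη hS hX) (β - θ * a + η * b)
  have hcenter (ω : Ω) :
      β - θ * a + η * b ≤ S ω - θ * a - (X ω - η * b) ↔ β ≤ S ω - X ω := by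
    constructor <;> intro h <;> linarith
  simp only [hcenter] at hstein
  set v := θ ^ 2 * a + η ^ 2 * b
  calc _ ≤ 2 * √Var[fun ω => θ * S ω + η * X ω; P] / v := hstein
    _ ≤ 2 * √(max θ η ^ 2 * v) / v := by gcongr
    _ = 2 * max θ η / √v := by
        rw [Real.sqrt_mul (sq_nonneg _), Real.sqrt_sq (by positivity), ← mul_assoc, mul_div_assoc,
          Real.sqrt_div_self, ← div_eq_mul_inv]

theorem gamma_difference_berry_esseen_general (ha : 0 ≤ a) (hb : 0 ≤ b) (hab : 0 < a + b)
    (hθ : 0 < θ) (hη : 0 < η) (hS : HasLaw S (gammaLaw a θ) P) (hX : HasLaw X (gammaLaw b η) P)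
    (hSX : IndepFun S X P) (β : ℝ) :
    |P.real {ω | β ≤ S ω - X ω} - gaussQ ((β - θ * a + η * b) / √(θ ^ 2 * a + η ^ 2 * b))| ≤
      2 * (max θ η / min θ η) / √(a + b) := by
  have hmin : 0 < min θ η := lt_min hθ hη
  have hv_ge : min θ η ^ 2 * (a + b) ≤ θ ^ 2 * a + η ^ 2 * b := by
    rw [mul_add]
    gcongr
    exacts [min_le_left _ _, min_le_right _ _]
  have hv : 0 < θ ^ 2 * a + η ^ 2 * b := lt_of_lt_of_le (by positivity) hv_ge
  calc _ ≤ 2 * max θ η / √(θ ^ 2 * a + η ^ 2 * b) :=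
        abs_measureReal_sub_gaussQ_le_of_gammaLaw ha hb hθ hη hv hS hX hSX β
    _ ≤ 2 * max θ η / √(min θ η ^ 2 * (a + b)) := by gcongr
    _ = 2 * (max θ η / min θ η) / √(a + b) := by
        rw [Real.sqrt_mul (sq_nonneg _), Real.sqrt_sq hmin.le]
        field_simp

end Difference

/-- Lemma 1 (Berry–Esseen-type uniform normal approximation): for a fixed scale
`α > 0` there is a constant `C > 0` such that for all `M ≥ 1`, `k ≥ 0`,
independent `S ∼ Γ(M, scale α)` and `X ∼ Γ(k, scale 1)` (`X ≡ 0` when `k = 0`),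
and every `β`, `|P(S − X ≥ β) − Q((β − αM + k)/√(α²M + k))| ≤ C/√(M + k)`. -/
theorem gamma_difference_berry_esseen
    (α : ℝ) (hα : 0 < α) :
    ∃ C : ℝ, 0 < C ∧
      ∀ (M k : ℕ), 1 ≤ M →
        ∀ {Ω : Type} [MeasurableSpace Ω] (P : Measure Ω) [IsProbabilityMeasure P]
          (S X : Ω → ℝ), Measurable S → Measurable X →
          IndepFun S X P →
          P.map S = gammaMeasure (M : ℝ) (1 / α) →
          P.map X = (if k = 0 then Measure.dirac 0 else gammaMeasure (k : ℝ) 1) →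
          ∀ β : ℝ,
            |(P {ω | β ≤ S ω - X ω}).toReal -
                gaussQ ((β - α * M + k) / Real.sqrt (α ^ 2 * M + k))|
              ≤ C / Real.sqrt (M + k) := by
  refine ⟨2 * (max α 1 / min α 1), by positivity, ?_⟩
  intro M k hM Ω _ P _ S X hS hX hSX hSlaw hXlaw β
  have hM0 : (M : ℝ) ≠ 0 := by positivity
  have hSgamma : HasLaw S (gammaLaw M α) P :=
    ⟨hS.aemeasurable, hSlaw.trans (gammaLaw_of_ne_zero hM0).symm⟩
  have hXgamma : HasLaw X (gammaLaw k 1) P :=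
    ⟨hX.aemeasurable, by simpa [gammaLaw] using hXlaw⟩
  simpa [measureReal_def] using
    gamma_difference_berry_esseen_general (Nat.cast_nonneg M) (Nat.cast_nonneg k)
      (by positivity) hα one_pos hSgamma hXgamma hSX β
end

section
/- Fix α > 0, τ ∈ (0,1), ζ > 0, β ≥ 0 and s ∈ ℝ. There exist a constant C > 0 and a positive integer N₀ such that for every integer N ≥ N₀ the denominator below is positive and | (β − α·ζ·N + s·√(N·τ(1−τ)) + N·τ)/√(α²·ζ·N + s·√(N·τ(1−τ)) + N·τ) − √N·(τ − α·ζ)/√(α²·ζ + τ) | ≤ C. -/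
/-!
After the substitution `x = √N` the error is `(c + b x + k x²) / √(a x² + q x) - x k / √a`.
Factoring out `x` writes the denominator as `x g` with `g = √(a + q / x) → √a`. The two growing
terms `k x / g` and `k x / √a` differ by a bounded amount, because `g² - (√a)² = q / x` is exactly
of the order that cancels the factor `x`. Hence the error converges, to
`b / √a - k q / (2 a √a)`.
-/

open Filter Topology

section QuadraticOverSqrt

variable (a b c k q : ℝ) {x : ℝ}

theorem tendsto_add_div_atTop_nhds : Tendsto (fun x : ℝ ↦ a + q / x) atTop (𝓝 a) := by
  simpa only [add_zero, id] using (tendsto_const_nhds (x := q)).div_atTop tendsto_id |>.const_add a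

theorem quadratic_eq_sq_mul_add_div (hx : x ≠ 0) :
    a * x ^ 2 + q * x = x ^ 2 * (a + q / x) := by
  field_simp

theorem sqrt_quadratic_eq_mul_sqrt (hx : 0 < x) :
    √(a * x ^ 2 + q * x) = x * √(a + q / x) := by
  rw [quadratic_eq_sq_mul_add_div a q hx.ne', Real.sqrt_mul (sq_nonneg x), Real.sqrt_sq hx.le]

variable {a}

theorem eventually_quadratic_pos (ha : 0 < a) : ∀ᶠ x : ℝ in atTop, 0 < a * x ^ 2 + q * x := by
  filter_upwards [eventually_gt_atTop 0, (tendsto_add_div_atTop_nhds a q).eventually_const_lt ha]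
    with x hx hpos
  rw [quadratic_eq_sq_mul_add_div a q hx.ne']
  positivity

theorem quadratic_div_sub_linear_eq {r g : ℝ} (hr : 0 < r) (hg : 0 < g) (hx : x ≠ 0)
    (hsq : g ^ 2 = r ^ 2 + q / x) :
    (c + b * x + k * x ^ 2) / (x * g) - x * k / r =
      (b + c / x) / g - k * q / (r * g * (r + g)) := by
  have hq : q = x * ((g - r) * (r + g)) := by
    rw [show (g - r) * (r + g) = q / x by linear_combination hsq, mul_div_cancel₀ q hx]
  have hrg : r + g ≠ 0 := by positivity
  rw [hq]
  field_simp
  ring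

theorem tendsto_quadratic_div_sqrt_sub_linear (ha : 0 < a) :
    Tendsto (fun x ↦ (c + b * x + k * x ^ 2) / √(a * x ^ 2 + q * x) - x * k / √a) atTop
      (𝓝 (b / √a - k * q / (2 * a * √a))) := by
  have hr : 0 < √a := Real.sqrt_pos.2 ha
  have hradicand := tendsto_add_div_atTop_nhds a q
  have hg : Tendsto (fun x ↦ √(a + q / x)) atTop (𝓝 √a) := hradicand.sqrt
  have hlim : Tendsto
      (fun x ↦ (b + c / x) / √(a + q / x) - k * q / (√a * √(a + q / x) * (√a + √(a + q / x))))
      atTop (𝓝 (b / √a - k * q / (√a * √a * (√a + √a)))) :=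
    ((tendsto_add_div_atTop_nhds b c).div hg hr.ne').sub <|
      tendsto_const_nhds.div ((hg.const_mul _).mul (hg.const_add _)) (by positivity)
  have hconst : √a * √a * (√a + √a) = 2 * a * √a := by
    rw [Real.mul_self_sqrt ha.le]
    ring
  rw [hconst] at hlim
  refine hlim.congr' ?_
  filter_upwards [eventually_gt_atTop 0, hradicand.eventually_const_lt ha] with x hx hpos
  rw [sqrt_quadratic_eq_mul_sqrt a q hx]
  refine (quadratic_div_sub_linear_eq b c k q hr (Real.sqrt_pos.2 hpos) hx.ne' ?_).symm
  rw [Real.sq_sqrt hpos.le, Real.sq_sqrt ha.le]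

end QuadraticOverSqrt

theorem exists_forall_ge_and_abs_le_of_tendsto {p : ℕ → Prop} {f : ℕ → ℝ} {l : ℝ}
    (hp : ∀ᶠ n in atTop, p n) (hf : Tendsto f atTop (𝓝 l)) :
    ∃ C : ℝ, 0 < C ∧ ∃ n₀ : ℕ, 0 < n₀ ∧ ∀ n : ℕ, n₀ ≤ n → p n ∧ |f n| ≤ C := by
  have hbound : ∀ᶠ n in atTop, |f n| ≤ |l| + 1 := hf.abs.eventually_le_const (lt_add_one |l|)
  obtain ⟨n₀, hn₀⟩ := eventually_atTop.1 (hp.and hbound)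
  exact ⟨|l| + 1, by positivity, n₀ + 1, n₀.succ_pos, fun n hn ↦ hn₀ n (n₀.le_succ.trans hn)⟩

theorem leading_term_error_bounded_general (α τ ζ β s : ℝ) (hτ0 : 0 ≤ τ) (hτ1 : τ ≤ 1)
    (hA : 0 < α ^ 2 * ζ + τ) :
    (∀ᶠ N : ℝ in atTop, 0 < α ^ 2 * ζ * N + s * √(N * τ * (1 - τ)) + N * τ) ∧
      Tendsto
        (fun N : ℝ ↦
          (β - α * ζ * N + s * √(N * τ * (1 - τ)) + N * τ) /
              √(α ^ 2 * ζ * N + s * √(N * τ * (1 - τ)) + N * τ) -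
            √N * (τ - α * ζ) / √(α ^ 2 * ζ + τ))
        atTop
        (𝓝 (s * √(τ * (1 - τ)) / √(α ^ 2 * ζ + τ) -
          (τ - α * ζ) * (s * √(τ * (1 - τ))) / (2 * (α ^ 2 * ζ + τ) * √(α ^ 2 * ζ + τ)))) := by
  set σ := s * √(τ * (1 - τ)) with hσ
  have hvar : 0 ≤ τ * (1 - τ) := mul_nonneg hτ0 (sub_nonneg.2 hτ1)
  have hfluct (N : ℝ) : s * √(N * τ * (1 - τ)) = σ * √N := by
    rw [mul_assoc N, Real.sqrt_mul' N hvar, hσ]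
    ring
  have hden {N : ℝ} (hN : 0 ≤ N) : α ^ 2 * ζ * N + s * √(N * τ * (1 - τ)) + N * τ =
      (α ^ 2 * ζ + τ) * √N ^ 2 + σ * √N := by
    rw [hfluct, Real.sq_sqrt hN]
    ring
  have hnum {N : ℝ} (hN : 0 ≤ N) : β - α * ζ * N + s * √(N * τ * (1 - τ)) + N * τ =
      β + σ * √N + (τ - α * ζ) * √N ^ 2 := by
    rw [hfluct, Real.sq_sqrt hN]
    ring
  constructor
  · filter_upwards [eventually_ge_atTop 0,
      Real.tendsto_sqrt_atTop.eventually (eventually_quadratic_pos σ hA)] with N hN hpos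
    rwa [hden hN]
  · refine ((tendsto_quadratic_div_sqrt_sub_linear σ β (τ - α * ζ) σ hA).comp
      Real.tendsto_sqrt_atTop).congr' ?_
    filter_upwards [eventually_ge_atTop 0] with N hN
    rw [Function.comp_apply, hnum hN, hden hN]

/-- Lemmas 4 and 5 combined: at any fixed `s`, replacing the Gaussian-substituted
Q-function argument by its leading term `√N (τ − αζ)/√(α²ζ + τ)` introduces an
error that stays bounded as `N → ∞`. -/
theorem leading_term_error_bounded
    (α τ ζ β s : ℝ) (hα : 0 < α) (hτ0 : 0 < τ) (hτ1 : τ < 1) (hζ : 0 < ζ)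
    (hβ : 0 ≤ β) :
    ∃ C : ℝ, 0 < C ∧ ∃ N₀ : ℕ, 0 < N₀ ∧ ∀ N : ℕ, N₀ ≤ N →
      0 < α ^ 2 * ζ * (N : ℝ) + s * Real.sqrt ((N : ℝ) * τ * (1 - τ)) +
          (N : ℝ) * τ ∧
      |(β - α * ζ * (N : ℝ) + s * Real.sqrt ((N : ℝ) * τ * (1 - τ)) +
            (N : ℝ) * τ) /
          Real.sqrt (α ^ 2 * ζ * (N : ℝ) +
            s * Real.sqrt ((N : ℝ) * τ * (1 - τ)) + (N : ℝ) * τ) -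
        Real.sqrt N * (τ - α * ζ) / Real.sqrt (α ^ 2 * ζ + τ)| ≤ C := by
  obtain ⟨hpos, hlim⟩ :=
    leading_term_error_bounded_general α τ ζ β s hτ0.le hτ1.le (by positivity)
  exact exists_forall_ge_and_abs_le_of_tendsto hpos.natCast_atTop
    (hlim.comp tendsto_natCast_atTop_atTop)
end

section
/- Let α > 0, ζ > 0, q ≥ 0 and N > 0 be real numbers, and define τ_ε := α·ζ + q²/(2N) − √( (α·ζ + q²/(2N))² + α²·(q²·ζ/N − ζ²) ). Then the radicand is nonnegative, α·ζ − τ_ε ≥ 0, and τ_ε satisfies N·(α·ζ − τ_ε)² = q²·(α²·ζ + τ_ε). -/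
/-!
In terms of the gap `x = αζ - τ` and `b = q² / (2N)`, the equation `N (αζ - τ)² = q² (α²ζ + τ)`
reads `x² + 2bx = 2b (α²ζ + αζ)`. The radicand is `b² + 2b (α²ζ + αζ)`, a quarter of the
discriminant, and `τ_ε` corresponds to the nonnegative root `x = √(b² + 2b (α²ζ + αζ)) - b`.
-/

section MonicQuadratic

variable {b d : ℝ}

lemma sqrt_sq_add_sub_nonneg (hd : 0 ≤ d) : 0 ≤ √(b ^ 2 + d) - b :=
  sub_nonneg.2 (Real.le_sqrt_of_sq_le (le_add_of_nonneg_right hd))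

lemma sqrt_sq_add_sub_sq_add_two_mul (h : 0 ≤ b ^ 2 + d) :
    (√(b ^ 2 + d) - b) ^ 2 + 2 * b * (√(b ^ 2 + d) - b) = d := by
  linear_combination Real.sq_sqrt h

end MonicQuadratic

lemma radicand_eq_sq_add (α ζ q N : ℝ) :
    (α * ζ + q ^ 2 / (2 * N)) ^ 2 + α ^ 2 * (q ^ 2 * ζ / N - ζ ^ 2) =
      (q ^ 2 / (2 * N)) ^ 2 + q ^ 2 / N * (α ^ 2 * ζ + α * ζ) := by
  ring

lemma mul_gap_sq_eq_iff {N : ℝ} (hN : N ≠ 0) (α ζ q τ : ℝ) :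
    N * (α * ζ - τ) ^ 2 = q ^ 2 * (α ^ 2 * ζ + τ) ↔
      (α * ζ - τ) ^ 2 + 2 * (q ^ 2 / (2 * N)) * (α * ζ - τ) =
        q ^ 2 / N * (α ^ 2 * ζ + α * ζ) := by
  field_simp
  constructor <;> intro h <;> linear_combination h

theorem tau_epsilon_identity_general {α ζ q N τ : ℝ} (hN : 0 < N)
    (hαζ : 0 ≤ α ^ 2 * ζ + α * ζ)
    (hτ : τ = α * ζ + q ^ 2 / (2 * N) -
      √((α * ζ + q ^ 2 / (2 * N)) ^ 2 + α ^ 2 * (q ^ 2 * ζ / N - ζ ^ 2))) :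
    0 ≤ (α * ζ + q ^ 2 / (2 * N)) ^ 2 + α ^ 2 * (q ^ 2 * ζ / N - ζ ^ 2) ∧
      0 ≤ α * ζ - τ ∧
      N * (α * ζ - τ) ^ 2 = q ^ 2 * (α ^ 2 * ζ + τ) := by
  rw [radicand_eq_sq_add] at hτ ⊢
  have excess_nonneg : 0 ≤ q ^ 2 / N * (α ^ 2 * ζ + α * ζ) := by positivity
  have radicand_nonneg := add_nonneg (sq_nonneg (q ^ 2 / (2 * N))) excess_nonneg
  have gap_eq : α * ζ - τ =
      √((q ^ 2 / (2 * N)) ^ 2 + q ^ 2 / N * (α ^ 2 * ζ + α * ζ)) - q ^ 2 / (2 * N) := by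
    linear_combination -hτ
  refine ⟨radicand_nonneg, ?_, ?_⟩
  · rw [gap_eq]
    exact sqrt_sq_add_sub_nonneg excess_nonneg
  · rw [mul_gap_sq_eq_iff hN.ne', gap_eq]
    exact sqrt_sq_add_sub_sq_add_two_mul radicand_nonneg

/-- Equation (44): `τ_ε` is the attempt probability at which the asymptotic
Q-function argument `√N (αζ − τ)/√(α²ζ + τ)` equals `q`: the radicand in its
definition is nonnegative, `αζ − τ_ε ≥ 0`, and `N(αζ − τ_ε)² = q²(α²ζ + τ_ε)`. -/
theorem tau_epsilon_identity
    (α ζ q N τε : ℝ) (hα : 0 < α) (hζ : 0 < ζ) (hq : 0 ≤ q) (hN : 0 < N)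
    (hτε : τε = α * ζ + q ^ 2 / (2 * N) -
      Real.sqrt ((α * ζ + q ^ 2 / (2 * N)) ^ 2 +
        α ^ 2 * (q ^ 2 * ζ / N - ζ ^ 2))) :
    0 ≤ (α * ζ + q ^ 2 / (2 * N)) ^ 2 + α ^ 2 * (q ^ 2 * ζ / N - ζ ^ 2) ∧
      0 ≤ α * ζ - τε ∧
      N * (α * ζ - τε) ^ 2 = q ^ 2 * (α ^ 2 * ζ + τε) :=
  tau_epsilon_identity_general hN (by positivity) hτε
end
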